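/- (Theorem 5.3: alternative form of the Harnack inequality.) Let d ≥ 3 and 0 < m < 1, and let p satisfy p = 1 if m > m_c and p > p_c if m ≤ m_c, where m_c = (d−2)/d, p_c = d(1−m)/2 and ϑ_p = 1/(2p − d(1−m)). There exist positive constants C₁, C₂ and h₂ depending only on m, d and p such that the following holds. Let u be a classical solution of the FDE ∂ₜu = Δ(u^m) on (0,T) × Ω taking nonnegative initial data u₀ ∈ L^p_loc(Ω) and having finite extinction time T, and let x₀ ∈ Ω, R > 0 with dist(x₀, ∂Ω) ≥ 6R. For t₀ ∈ [0, T) set t_*(t₀) = h₂ R^{2−d(1−m)} ‖u(t₀,·)‖_{L¹(B_R(x₀))}^{1−m} (with u(0,·) = u₀), and assume ‖u(t₀,·)‖_{L¹(B_R(x₀))} > 0. Then for all t, ϑ ≥ 0 with t₀ < t − ϑ and t + ϑ < t₀ + t_*(t₀): sup over x ∈ B_R(x₀) of u(t,x) is at most C₁ (t − t₀)^{−dϑ_p} ‖u(t₀,·)‖_{L^p(B_{2R}(x₀))}^{2pϑ_p} + C₂ ( ‖u(t₀,·)‖_{L^p(B_R(x₀))} R^d / ( ‖u(t₀,·)‖_{L¹(B_R(x₀))}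 R^{d/p} ) )^{1/m} · inf over x ∈ B_R(x₀) of u(t±ϑ, x) (for both choices of sign). -/

import Mathlib

open MeasureTheory Metric Set Real

/-- The spatial Laplacian of `f : ℝ^d → ℝ` at a point, as the sum of second
coordinate derivatives. -/
noncomputable def spaceLap {d : ℕ} (f : EuclideanSpace ℝ (Fin d) → ℝ)
    (x : EuclideanSpace ℝ (Fin d)) : ℝ :=
  ∑ i : Fin d, fderiv ℝ (fun y => fderiv ℝ f y (EuclideanSpace.single i 1)) x
    (EuclideanSpace.single i 1)

/-- `u` is a classical solution of the fast diffusion equation `∂ₜ u = Δ(u^m)`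
on the space-time set `Q`: it is positive and smooth on `Q` and satisfies the
equation pointwise on `Q`. -/
def IsFDESol {d : ℕ} (m : ℝ) (Q : Set (ℝ × EuclideanSpace ℝ (Fin d)))
    (u : ℝ → EuclideanSpace ℝ (Fin d) → ℝ) : Prop :=
  (∀ p ∈ Q, 0 < u p.1 p.2) ∧
  ContDiffOn ℝ (⊤ : ℕ∞) (fun p : ℝ × EuclideanSpace ℝ (Fin d) => u p.1 p.2) Q ∧
  ∀ p ∈ Q, deriv (fun s => u s p.2) p.1 = spaceLap (fun y => u p.1 y ^ m) p.2

/-- `u` (defined for `0 < t < T` on `Ω`) takes the initial data `u₀`: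
it extends continuously to `{0} × Ω` with value `u₀` there. -/
def TakesInit {d : ℕ} (T : ℝ) (Ω : Set (EuclideanSpace ℝ (Fin d)))
    (u : ℝ → EuclideanSpace ℝ (Fin d) → ℝ) (u₀ : EuclideanSpace ℝ (Fin d) → ℝ) : Prop :=
  ContinuousOn (fun p : ℝ × EuclideanSpace ℝ (Fin d) => u p.1 p.2) (Ico 0 T ×ˢ Ω) ∧
  ∀ x ∈ Ω, u 0 x = u₀ x

/-- `u` has finite extinction time `T` on `Ω`: it extends continuously to
`{T} × Ω` with value `0` there, while `u(t,·)` is not identically zero for `0 < t < T`. -/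
def ExtinctAt {d : ℕ} (T : ℝ) (Ω : Set (EuclideanSpace ℝ (Fin d)))
    (u : ℝ → EuclideanSpace ℝ (Fin d) → ℝ) : Prop :=
  ContinuousOn (fun p : ℝ × EuclideanSpace ℝ (Fin d) => u p.1 p.2) (Ioc 0 T ×ˢ Ω) ∧
  (∀ x ∈ Ω, u T x = 0) ∧
  ∀ t ∈ Ioo 0 T, ∃ x ∈ Ω, u t x ≠ 0

/-!
The inequality holds because of a stronger pure smoothing effect: before the time `t₀ + t_*` the
supremum is controlled by the first summand alone. The `L¹` mass in a ball decays at a controlled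
rate, so the solution cannot become extinct before `t₀ + t_*`; hence `u` is nonnegative at the
times `t ± ϑ`, and the infimum term may be added for free.

For the smoothing effect, subtract a paraboloid from `u ^ m` in a backward cylinder of intrinsic
size whose top centre is a point with `u = M`, and touch the difference from above by space-affine
functions. The area formula for the map from contact points to tangent planes shows that either
`u > L M` somewhere in the cylinder, for a fixed `L > 1`, or `u ≥ c M` on a fixed fraction of it.
The stability of the local `L^p` norm in time and Chebyshev's inequality exclude the second
alternative as soon as `M` beats the claimed bound. The first one can then be iterated: `u` grows
geometrically along a sequence of points in cylinders whose sizes are summable, contradicting its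
boundedness on compact sets.
-/

section

open Filter Topology
open scoped Nat

section SecondDerivatives

variable {E F G : Type*} [NormedAddCommGroup E] [NormedSpace ℝ E] [NormedAddCommGroup F]
  [NormedSpace ℝ F] [NormedAddCommGroup G] [NormedSpace ℝ G]

theorem deriv_deriv_nonpos_of_isLocalMax {g : ℝ → ℝ} {x : ℝ} (hmax : IsLocalMax g x)
    (hg : ContinuousAt g x) : deriv (deriv g) x ≤ 0 := by
  by_contra! hpos
  have hmin : IsLocalMin g x := isLocalMin_of_deriv_deriv_pos hpos hmax.deriv_eq_zero hg
  have hconst : g =ᶠ[𝓝 x] fun _ => g x := by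
    filter_upwards [hmax, hmin] with y hle hge using le_antisymm hle hge
  have hzero := hconst.deriv.deriv_eq
  simp only [deriv_const', deriv_const] at hzero
  exact hpos.ne' hzero

theorem differentiableAt_fderiv_of_contDiffAt_two {f : E → F} {q : E} (hf : ContDiffAt ℝ 2 f q) :
    DifferentiableAt ℝ (fderiv ℝ f) q :=
  (hf.fderiv_right (m := 1) (by norm_num)).differentiableAt (by simp)

theorem deriv_deriv_comp_add_smul {f : E → ℝ} {q : E} (hf : ContDiffAt ℝ 2 f q) (v : E) :
    deriv (deriv fun s : ℝ => f (q + s • v)) 0 = fderiv ℝ (fderiv ℝ f) q v v := by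
  have hline (s : ℝ) : HasDerivAt (fun s : ℝ => q + s • v) v s := by
    simpa using ((hasDerivAt_id s).smul_const v).const_add q
  have htendsto : Tendsto (fun s : ℝ => q + s • v) (𝓝 0) (𝓝 q) := by
    simpa using (hline 0).continuousAt.tendsto
  have hfirst : (deriv fun s : ℝ => f (q + s • v)) =ᶠ[𝓝 0] fun s => fderiv ℝ f (q + s • v) v := by
    filter_upwards [htendsto.eventually (hf.eventually (by simp))] with s hs
    exact ((hs.differentiableAt (by simp)).hasFDerivAt.comp_hasDerivAt s (hline s)).deriv
  have hsecond : HasFDerivAt (fderiv ℝ f) (fderiv ℝ (fderiv ℝ f) q) (q + (0 : ℝ) • v) := by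
    simpa using (differentiableAt_fderiv_of_contDiffAt_two hf).hasFDerivAt
  have hderiv : HasDerivAt (fun s : ℝ => fderiv ℝ f (q + s • v) v)
      (fderiv ℝ (fderiv ℝ f) q v v) 0 :=
    (ContinuousLinearMap.apply ℝ ℝ v).hasFDerivAt.comp_hasDerivAt (0 : ℝ)
      (hsecond.comp_hasDerivAt (0 : ℝ) (hline 0))
  rw [hfirst.deriv_eq, hderiv.deriv]

theorem fderiv_fderiv_apply_self_nonpos_of_isLocalMax {f : E → ℝ} {q : E}
    (hf : ContDiffAt ℝ 2 f q) (hmax : IsLocalMax f q) (v : E) :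
    fderiv ℝ (fderiv ℝ f) q v v ≤ 0 := by
  have hline : ContinuousAt (fun s : ℝ => q + s • v) 0 := by fun_prop
  have hmax_line : IsLocalMax f (q + (0 : ℝ) • v) := by simpa using hmax
  have hcont : ContinuousAt f (q + (0 : ℝ) • v) := by simpa using hf.continuousAt
  rw [← deriv_deriv_comp_add_smul hf v]
  exact deriv_deriv_nonpos_of_isLocalMax (hline.tendsto.eventually hmax_line)
    (hcont.comp (f := fun s : ℝ => q + s • v) hline)

theorem fderiv_comp_prodMk_right {f : F × E → G} {t : F} {x : E}
    (hf : DifferentiableAt ℝ f (t, x)) :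
    fderiv ℝ (fun y => f (t, y)) x = (fderiv ℝ f (t, x)).comp (.inr ℝ F E) :=
  (hf.hasFDerivAt.comp x (hasFDerivAt_prodMk_right t x)).fderiv

theorem fderiv_fderiv_comp_prodMk_right {f : F × E → G} {t : F} {x : E}
    (hf : ContDiffAt ℝ 2 f (t, x)) (v w : E) :
    fderiv ℝ (fderiv ℝ fun y => f (t, y)) x v w =
      fderiv ℝ (fderiv ℝ f) (t, x) (0, v) (0, w) := by
  have hmk : Tendsto (fun y : E => (t, y)) (𝓝 x) (𝓝 (t, x)) :=
    (Continuous.prodMk_right t).tendsto x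
  have hfirst : (fderiv ℝ fun y => f (t, y)) =ᶠ[𝓝 x]
      fun y => (fderiv ℝ f (t, y)).comp (.inr ℝ F E) := by
    filter_upwards [hmk.eventually (hf.eventually (by simp))] with y hy
    exact fderiv_comp_prodMk_right (hy.differentiableAt (by simp))
  have hsecond : HasFDerivAt (fun y => fderiv ℝ f (t, y)) _ x :=
    (differentiableAt_fderiv_of_contDiffAt_two hf).hasFDerivAt.comp x (hasFDerivAt_prodMk_right t x)
  rw [hfirst.fderiv_eq, (hsecond.clm_comp (hasFDerivAt_const _ x)).fderiv]
  simp

theorem fderiv_fst_nonneg_of_le {f : ℝ × E → ℝ} {a t : ℝ} {x : E}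
    (hf : DifferentiableAt ℝ f (t, x)) (hat : a < t) (hle : ∀ s ∈ Ico a t, f (s, x) ≤ f (t, x)) :
    0 ≤ fderiv ℝ f (t, x) (1, 0) := by
  have hmax : IsLocalMaxOn (fun s => f (s, x)) (Icc a t) t :=
    eventually_mem_nhdsWithin.mono fun s hs => by
      rcases hs.2.eq_or_lt with rfl | hst
      exacts [le_rfl, hle s ⟨hs.1, hst⟩]
  have hdir : a - t ∈ posTangentConeAt (Icc a t) t :=
    sub_mem_posTangentConeAt_of_segment_subset
      ((convex_Icc a t).segment_subset (right_mem_Icc.2 hat.le) (left_mem_Icc.2 hat.le))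
  have hderiv := hmax.hasFDerivWithinAt_nonpos
    (hf.hasFDerivAt.comp t (hasFDerivAt_prodMk_left t x)).hasFDerivWithinAt hdir
  have hsmul : ((a - t, 0) : ℝ × E) = (a - t) • (1, 0) := by simp
  rw [ContinuousLinearMap.comp_apply, ContinuousLinearMap.inl_apply, hsmul, map_smul, smul_eq_mul]
    at hderiv
  nlinarith

end SecondDerivatives

section FirstContact

theorem exists_first_zero {X : Type*} [TopologicalSpace X] [T2Space X] {K : Set X}
    (hK : IsCompact K) {a b : ℝ} (hab : a ≤ b) {g : ℝ × X → ℝ}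
    (hg : ContinuousOn g (Icc a b ×ˢ K)) (hinit : ∀ x ∈ K, g (a, x) < 0) {x₁ : X} (hx₁ : x₁ ∈ K)
    (hfinal : 0 ≤ g (b, x₁)) :
    ∃ t ∈ Ioc a b, ∃ x ∈ K, g (t, x) = 0 ∧ (∀ s ∈ Ico a t, ∀ y ∈ K, g (s, y) < 0) ∧
      ∀ y ∈ K, g (t, y) ≤ 0 := by
  have hcompact : IsCompact (Icc a b ×ˢ K) := isCompact_Icc.prod hK
  have hsuper : IsCompact (Icc a b ×ˢ K ∩ g ⁻¹' Ici 0) := hcompact.of_isClosed_subset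
    (hg.preimage_isClosed_of_isClosed hcompact.isClosed isClosed_Ici) inter_subset_left
  obtain ⟨⟨t, x⟩, ⟨⟨ht, hx⟩, hnonneg⟩, hfirst⟩ := hsuper.exists_isMinOn
    ⟨(b, x₁), ⟨⟨hab, le_rfl⟩, hx₁⟩, hfinal⟩ continuous_fst.continuousOn
  have hbefore : ∀ s ∈ Ico a t, ∀ y ∈ K, g (s, y) < 0 := fun s hs y hy => by
    by_contra! hsy
    exact hs.2.not_ge (hfirst (a := (s, y)) ⟨⟨⟨hs.1, hs.2.le.trans ht.2⟩, hy⟩, hsy⟩)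
  have hat : a < t := ht.1.lt_of_ne (by rintro rfl; exact (hinit x hx).not_ge hnonneg)
  have hcontact : ∀ y ∈ K, g (t, y) ≤ 0 := fun y hy => by
    have hleft : Tendsto (fun s => g (s, y)) (𝓝[Ioo a t] t) (𝓝 (g (t, y))) :=
      (hg (t, y) ⟨ht, hy⟩).tendsto.comp (tendsto_nhdsWithin_iff.2
        ⟨((Continuous.prodMk_left y).tendsto t).mono_left nhdsWithin_le_nhds,
          eventually_mem_nhdsWithin.mono fun s hs => ⟨⟨hs.1.le, hs.2.le.trans ht.2⟩, hy⟩⟩)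
    have : (𝓝[Ioo a t] t).NeBot := right_nhdsWithin_Ioo_neBot hat
    exact le_of_tendsto hleft
      (eventually_mem_nhdsWithin.mono fun s hs => (hbefore s ⟨hs.1.le, hs.2⟩ y hy).le)
  exact ⟨t, ⟨hat, ht.2⟩, x, hx, (hcontact x hx).antisymm hnonneg, hbefore, hcontact⟩

/-- The backward space-time cylinder of height `τ` whose top is the closed ball of radius `r`
around `x` at time `t`. -/
abbrev backwardCylinder {E : Type*} [PseudoMetricSpace E] (t τ : ℝ) (x : E) (r : ℝ) : Set (ℝ × E) :=
  Icc (t - τ) t ×ˢ closedBall x r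

variable {E : Type*} [NormedAddCommGroup E] [InnerProductSpace ℝ E]

theorem fderiv_space_eq_inner_of_touches_affine {Z : ℝ × E → ℝ} {t c : ℝ} {x ξ : E}
    (hZ : ContDiffAt ℝ 2 Z (t, x))
    (hmax : IsLocalMax (fun y => Z (t, y) - (c + inner ℝ ξ y)) x) (y : E) :
    fderiv ℝ Z (t, x) (0, y) = inner ℝ ξ y ∧
      fderiv ℝ (fderiv ℝ Z) (t, x) (0, y) (0, y) ≤ 0 := by
  have hslice : ContDiffAt ℝ 2 (fun y => Z (t, y)) x := hZ.comp x (by fun_prop)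
  have haffine (z : E) : HasFDerivAt (fun y => c + inner ℝ ξ y) (innerSL ℝ ξ) z :=
    (innerSL ℝ ξ).hasFDerivAt.const_add c
  have hfirst : fderiv ℝ (fun y => Z (t, y) - (c + inner ℝ ξ y)) =ᶠ[𝓝 x]
      fun z => fderiv ℝ (fun y => Z (t, y)) z - innerSL ℝ ξ := by
    filter_upwards [hslice.eventually (by simp)] with z hz
    exact ((hz.differentiableAt (by simp)).hasFDerivAt.sub (haffine z)).fderiv
  have hzero : fderiv ℝ (fun y => Z (t, y)) x - innerSL ℝ ξ = 0 :=
    hfirst.self_of_nhds.symm.trans hmax.fderiv_eq_zero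
  have hdiff : ContDiffAt ℝ 2 (fun y => Z (t, y) - (c + inner ℝ ξ y)) x :=
    hslice.sub (contDiffAt_const.add (innerSL ℝ ξ).contDiff.contDiffAt)
  have hneg := fderiv_fderiv_apply_self_nonpos_of_isLocalMax hdiff hmax y
  rw [hfirst.fderiv_eq, fderiv_sub_const, fderiv_fderiv_comp_prodMk_right hZ] at hneg
  rw [fderiv_comp_prodMk_right (hZ.differentiableAt (by simp))] at hzero
  exact ⟨by simpa using DFunLike.congr_fun (sub_eq_zero.1 hzero) y, hneg⟩

theorem exists_contact_with_affine [ProperSpace E] {U : Set (ℝ × E)} (hU : IsOpen U)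
    {Z : ℝ × E → ℝ} (hZ : ContDiffOn ℝ 2 Z U) {t₁ τ r : ℝ} {x₁ : E} (hr : 0 < r) (hτ : 0 < τ)
    (hQ : backwardCylinder t₁ τ x₁ r ⊆ U)
    (hbottom : ∀ x ∈ closedBall x₁ r, Z (t₁ - τ, x) ≤ 0)
    (hlateral : ∀ t ∈ Icc (t₁ - τ) t₁, ∀ x ∈ sphere x₁ r, Z (t, x) ≤ 0)
    {h : ℝ} (htop : h ≤ Z (t₁, x₁)) {ξ : E} {δ : ℝ} (hδ : 0 < δ) (hξ : ‖ξ‖ * r + δ ≤ h) :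
    ∃ q ∈ backwardCylinder t₁ τ x₁ r, δ ≤ Z q ∧ Z q - inner ℝ ξ (q.2 - x₁) = h ∧
      (∀ y, fderiv ℝ Z q (0, y) = inner ℝ ξ y) ∧ 0 ≤ fderiv ℝ Z q (1, 0) ∧
      ∀ y, fderiv ℝ (fderiv ℝ Z) q (0, y) (0, y) ≤ 0 := by
  have hplane : ∀ x ∈ closedBall x₁ r, δ ≤ h + inner ℝ ξ (x - x₁) := fun x hx => by
    have hnorm : ‖ξ‖ * ‖x - x₁‖ ≤ ‖ξ‖ * r := by
      gcongr
      exact mem_closedBall_iff_norm.1 hx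
    linarith [(abs_le.1 (abs_real_inner_le_norm ξ (x - x₁))).1]
  obtain ⟨t, ht, x, hx, htouch, hbefore, hat⟩ := exists_first_zero (isCompact_closedBall x₁ r)
    (sub_le_self t₁ hτ.le) (g := fun q => Z q - (h + inner ℝ ξ (q.2 - x₁)))
    ((hZ.continuousOn.mono hQ).sub (by fun_prop))
    (fun x hx => by linarith [hbottom x hx, hplane x hx]) (mem_closedBall_self hr.le) (by simpa)
  have htQ : t ∈ Icc (t₁ - τ) t₁ := Ioc_subset_Icc_self ht
  have hball : x ∈ ball x₁ r := (mem_closedBall.1 hx).lt_of_ne fun hdist => by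
    linarith [hlateral t htQ x hdist, hplane x hx]
  have hcd : ContDiffAt ℝ 2 Z (t, x) := hZ.contDiffAt (hU.mem_nhds (hQ ⟨htQ, hx⟩))
  have hmax : IsLocalMax (fun y => Z (t, y) - (h - inner ℝ ξ x₁ + inner ℝ ξ y)) x := by
    filter_upwards [isOpen_ball.mem_nhds hball] with y hy
    have := hat y (ball_subset_closedBall hy)
    simp only [inner_sub_right] at this htouch
    linarith
  refine ⟨(t, x), ⟨htQ, hx⟩, by linarith [hplane x hx], by linarith,
    fun y => (fderiv_space_eq_inner_of_touches_affine hcd hmax y).1, ?_,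
    fun y => (fderiv_space_eq_inner_of_touches_affine hcd hmax y).2⟩
  exact fderiv_fst_nonneg_of_le (hcd.differentiableAt (by simp)) ht.1
    fun s hs => by linarith [hbefore s hs x hx]

end FirstContact

section Determinants

theorem det_fst_sub_comp_prod {K V : Type*} [CommRing K] [AddCommGroup V] [Module K V]
    [Module.Free K V] [Module.Finite K V] (c : K) (l : V →ₗ[K] K) (N : K × V →ₗ[K] V) :
    LinearMap.det ((c • LinearMap.fst K K V - l ∘ₗ N).prod N) =
      c * LinearMap.det (N ∘ₗ LinearMap.inr K K V) := by
  have hfactor : (c • LinearMap.fst K K V - l ∘ₗ N).prod N =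
      LinearMap.transvection (-(l ∘ₗ LinearMap.snd K K V)) (1, 0) ∘ₗ
        LinearMap.transvection (LinearMap.fst K K V) (c - 1, N (1, 0)) ∘ₗ
          LinearMap.prodMap LinearMap.id (N ∘ₗ LinearMap.inr K K V) := by
    ext <;> simp [LinearMap.transvection.apply, Prod.mk_zero_zero, sub_eq_add_neg]
  rw [hfactor, LinearMap.det_comp, LinearMap.det_comp, LinearMap.transvection.det,
    LinearMap.transvection.det, LinearMap.det_prodMap]
  simp

variable {E ι : Type*} [NormedAddCommGroup E] [InnerProductSpace ℝ E] [Fintype ι]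

theorem abs_det_le_of_abs_inner_le (e : OrthonormalBasis ι ℝ E) {A : E →ₗ[ℝ] E} {b : ℝ}
    (hA : ∀ i j, |inner ℝ (e i) (A (e j))| ≤ b) :
    |LinearMap.det A| ≤ (Fintype.card ι)! * b ^ Fintype.card ι := by
  classical
  rw [← LinearMap.det_toMatrix e.toBasis]
  have hdet := Matrix.det_le (A := LinearMap.toMatrix e.toBasis e.toBasis A)
    (abv := AbsoluteValue.abs) (x := b) fun i j => by
      simpa [LinearMap.toMatrix_apply, e.repr_apply_apply] using hA i j
  simpa using hdet

end Determinants

theorem abs_apply_le_of_apply_self_nonpos {V ι : Type*} [AddCommGroup V] [Module ℝ V]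
    (B : V →ₗ[ℝ] V →ₗ[ℝ] ℝ) (hsymm : ∀ v w, B v w = B w v) (hneg : ∀ v, B v v ≤ 0) {e : ι → V}
    {b : ℝ} (hb : ∀ i, |B (e i) (e i)| ≤ b) (i j : ι) : |B (e i) (e j)| ≤ b := by
  have hadd := hneg (e i + e j)
  have hsub := hneg (e i - e j)
  simp only [map_add, map_sub, LinearMap.add_apply, LinearMap.sub_apply, hsymm (e j) (e i)]
    at hadd hsub
  have hi := neg_le_of_abs_le (hb i)
  have hj := neg_le_of_abs_le (hb j)
  exact abs_le.2 ⟨by linarith, by linarith⟩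

section ContactSet

variable {E : Type*} [NormedAddCommGroup E] [InnerProductSpace ℝ E]

/-- The points of `Q` where `Z ≥ δ` can be touched from above, backward in time, by a
space-affine function: the time derivative is nonnegative and the space Hessian is negative
semidefinite. -/
def contactSet (Z : ℝ × E → ℝ) (Q : Set (ℝ × E)) (δ : ℝ) : Set (ℝ × E) :=
  {q ∈ Q | δ ≤ Z q ∧ 0 ≤ fderiv ℝ Z q (1, 0) ∧
    ∀ y, fderiv ℝ (fderiv ℝ Z) q (0, y) (0, y) ≤ 0}

theorem isClosed_contactSet {U Q : Set (ℝ × E)} (hU : IsOpen U) (hQ : IsClosed Q) (hQU : Q ⊆ U)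
    {Z : ℝ × E → ℝ} (hZ : ContDiffOn ℝ 2 Z U) (δ : ℝ) : IsClosed (contactSet Z Q δ) := by
  have hfirst : ContDiffOn ℝ 1 (fderiv ℝ Z) U := hZ.fderiv_of_isOpen hU (by norm_num)
  have hsecond : ContinuousOn (fderiv ℝ (fderiv ℝ Z)) Q :=
    (hfirst.continuousOn_fderiv_of_isOpen hU (by norm_num)).mono hQU
  have hsplit : contactSet Z Q δ = (Q ∩ Z ⁻¹' Ici δ) ∩
      ((Q ∩ (fun q => fderiv ℝ Z q (1, 0)) ⁻¹' Ici 0) ∩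
        ⋂ y : E, Q ∩ (fun q => fderiv ℝ (fderiv ℝ Z) q (0, y) (0, y)) ⁻¹' Iic 0) := by
    ext q
    simp only [contactSet, mem_ofPred_eq, mem_inter_iff, mem_iInter, mem_preimage, mem_Ici,
      mem_Iic, forall_and, forall_const]
    tauto
  rw [hsplit]
  refine ((hZ.continuousOn.mono hQU).preimage_isClosed_of_isClosed hQ isClosed_Ici).inter
    (IsClosed.inter ?_ (isClosed_iInter fun y => ?_))
  · exact ((hfirst.continuousOn.mono hQU).clm_apply
      continuousOn_const).preimage_isClosed_of_isClosed hQ isClosed_Ici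
  · exact ((hsecond.clm_apply continuousOn_const).clm_apply
      continuousOn_const).preimage_isClosed_of_isClosed hQ isClosed_Iic

variable [FiniteDimensional ℝ E]

/-- The space component of a space-time covector, identified with a vector through the inner
product. It is built from an orthonormal basis in order to be a continuous linear map. -/
noncomputable def spaceGrad : (ℝ × E →L[ℝ] ℝ) →L[ℝ] E :=
  ∑ i, (ContinuousLinearMap.apply ℝ ℝ ((0 : ℝ), stdOrthonormalBasis ℝ E i)).smulRight
    (stdOrthonormalBasis ℝ E i)

theorem inner_spaceGrad (L : ℝ × E →L[ℝ] ℝ) (y : E) : inner ℝ (spaceGrad L) y = L (0, y) := by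
  have hL (z : E) : L (0, z) = (L.comp (.inr ℝ ℝ E)) z := rfl
  rw [hL y, ← (stdOrthonormalBasis ℝ E).sum_repr' y, map_sum]
  simp only [spaceGrad, _root_.sum_apply, ContinuousLinearMap.smulRight_apply,
    ContinuousLinearMap.apply_apply, hL, map_smul, smul_eq_mul, sum_inner, inner_smul_left,
    OrthonormalBasis.sum_repr']
  exact Finset.sum_congr rfl fun i _ => by simp [mul_comm]

theorem spaceGrad_eq_of_apply_eq_inner {L : ℝ × E →L[ℝ] ℝ} {ξ : E}
    (h : ∀ y, L (0, y) = inner ℝ ξ y) : spaceGrad L = ξ :=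
  ext_inner_right ℝ fun y => (inner_spaceGrad L y).trans (h y)

/-- The value at `x₁` and the slope of the space-affine function tangent to `Z` at `q`. -/
noncomputable def tangentPlane (Z : ℝ × E → ℝ) (x₁ : E) (q : ℝ × E) : ℝ × E :=
  (Z q - inner ℝ (spaceGrad (fderiv ℝ Z q)) (q.2 - x₁), spaceGrad (fderiv ℝ Z q))

/-- The derivative of `tangentPlane Z x₁` at `q`: the first derivatives of `Z` in space cancel. -/
noncomputable def tangentPlaneDeriv (Z : ℝ × E → ℝ) (x₁ : E) (q : ℝ × E) : ℝ × E →L[ℝ] ℝ × E :=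
  (fderiv ℝ Z q (1, 0) • ContinuousLinearMap.fst ℝ ℝ E -
    (innerSL ℝ (q.2 - x₁)).comp (spaceGrad.comp (fderiv ℝ (fderiv ℝ Z) q))).prod
      (spaceGrad.comp (fderiv ℝ (fderiv ℝ Z) q))

theorem hasFDerivAt_tangentPlane {Z : ℝ × E → ℝ} {q : ℝ × E} (hZ : ContDiffAt ℝ 2 Z q) (x₁ : E) :
    HasFDerivAt (tangentPlane Z x₁) (tangentPlaneDeriv Z x₁ q) q := by
  have hvalue : HasFDerivAt Z (fderiv ℝ Z q) q := (hZ.differentiableAt (by simp)).hasFDerivAt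
  have hslope : HasFDerivAt (fun q => spaceGrad (fderiv ℝ Z q))
      (spaceGrad.comp (fderiv ℝ (fderiv ℝ Z) q)) q :=
    (spaceGrad (E := E)).hasFDerivAt.comp q
      (differentiableAt_fderiv_of_contDiffAt_two hZ).hasFDerivAt
  have hpoint : HasFDerivAt (fun q : ℝ × E => q.2 - x₁) (.snd ℝ ℝ E) q :=
    hasFDerivAt_snd.sub_const x₁
  refine ((hvalue.sub (hslope.inner ℝ hpoint)).prodMk hslope).congr_fderiv ?_
  refine ContinuousLinearMap.ext fun v => ?_
  have hsplit : fderiv ℝ Z q v =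
      v.1 * fderiv ℝ Z q (1, 0) + inner ℝ (spaceGrad (fderiv ℝ Z q)) v.2 := by
    rw [inner_spaceGrad, ← smul_eq_mul, ← map_smul, ← map_add]
    simp
  refine Prod.ext ?_ rfl
  change fderiv ℝ Z q v - (inner ℝ (spaceGrad (fderiv ℝ Z q)) v.2 +
      inner ℝ (spaceGrad (fderiv ℝ (fderiv ℝ Z) q v)) (q.2 - x₁)) =
    fderiv ℝ Z q (1, 0) * v.1 - inner ℝ (q.2 - x₁) (spaceGrad (fderiv ℝ (fderiv ℝ Z) q v))
  rw [hsplit, real_inner_comm (q.2 - x₁)]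
  ring

theorem abs_det_tangentPlaneDeriv_le {ι : Type*} [Fintype ι] (e : OrthonormalBasis ι ℝ E)
    {Z : ℝ × E → ℝ} {q : ℝ × E} (hZ : ContDiffAt ℝ 2 Z q) (x₁ : E)
    (hconcave : ∀ y, fderiv ℝ (fderiv ℝ Z) q (0, y) (0, y) ≤ 0) {a b : ℝ}
    (ha : |fderiv ℝ Z q (1, 0)| ≤ a)
    (hb : ∀ i, |fderiv ℝ (fderiv ℝ Z) q (0, e i) (0, e i)| ≤ b) :
    |(tangentPlaneDeriv Z x₁ q).det| ≤ a * ((Fintype.card ι)! * b ^ Fintype.card ι) := by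
  have hsymm : IsSymmSndFDerivAt ℝ Z q := hZ.isSymmSndFDerivAt (by simp)
  let hessian : E →ₗ[ℝ] E →ₗ[ℝ] ℝ := LinearMap.mk₂ ℝ
    (fun v w => fderiv ℝ (fderiv ℝ Z) q (ContinuousLinearMap.inr ℝ ℝ E v)
      (ContinuousLinearMap.inr ℝ ℝ E w))
    (by simp only [map_add, _root_.add_apply, implies_true])
    (by simp only [map_smul, _root_.smul_apply, implies_true])
    (by simp only [map_add, implies_true]) (by simp only [map_smul, implies_true])
  have hentries := abs_apply_le_of_apply_self_nonpos hessian (fun v w => hsymm _ _) hconcave hb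
  have hdet := det_fst_sub_comp_prod (fderiv ℝ Z q (1, 0)) (innerSL ℝ (q.2 - x₁)).toLinearMap
    (spaceGrad.comp (fderiv ℝ (fderiv ℝ Z) q)).toLinearMap
  rw [ContinuousLinearMap.det]
  refine (congrArg abs hdet).trans_le ?_
  rw [abs_mul]
  refine mul_le_mul ha (abs_det_le_of_abs_inner_le e fun i j => ?_) (abs_nonneg _)
    ((abs_nonneg _).trans ha)
  rw [real_inner_comm]
  exact (congrArg abs (inner_spaceGrad _ _)).trans_le (hentries j i)

theorem prod_closedBall_subset_image_tangentPlane {U : Set (ℝ × E)} (hU : IsOpen U)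
    {Z : ℝ × E → ℝ} (hZ : ContDiffOn ℝ 2 Z U) {t₁ τ r : ℝ} {x₁ : E} (hr : 0 < r) (hτ : 0 < τ)
    (hQ : backwardCylinder t₁ τ x₁ r ⊆ U)
    (hbottom : ∀ x ∈ closedBall x₁ r, Z (t₁ - τ, x) ≤ 0)
    (hlateral : ∀ t ∈ Icc (t₁ - τ) t₁, ∀ x ∈ sphere x₁ r, Z (t, x) ≤ 0)
    {H : ℝ} (hH : 0 < H) (htop : H ≤ Z (t₁, x₁)) :
    Icc (H / 2) H ×ˢ closedBall (0 : E) (H / (4 * r)) ⊆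
      tangentPlane Z x₁ '' contactSet Z (backwardCylinder t₁ τ x₁ r) (H / 4) := by
  rintro ⟨h, ξ⟩ ⟨hh, hξ⟩
  have hslope : ‖ξ‖ * r ≤ H / 4 := by
    calc ‖ξ‖ * r ≤ H / (4 * r) * r := by gcongr; simpa using hξ
      _ = H / 4 := by field_simp
  have hheight : ‖ξ‖ * r + H / 4 ≤ h := by linarith [hh.1]
  obtain ⟨q, hqQ, hqZ, hvalue, hgrad, htime, hconcave⟩ :=
    exists_contact_with_affine hU hZ hr hτ hQ hbottom hlateral (hh.2.trans htop)
      (by positivity) hheight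
  refine ⟨q, ⟨hqQ, hqZ, htime, hconcave⟩, ?_⟩
  rw [tangentPlane, spaceGrad_eq_of_apply_eq_inner hgrad, hvalue]

/-- The measure estimate of Aleksandrov–Bakelman–Pucci type, in its parabolic form due to Krylov:
the area formula for `tangentPlane` on the contact set. -/
theorem prod_closedBall_measure_le_contactSet [MeasurableSpace E] [BorelSpace E] (μ : Measure E)
    [μ.IsAddHaarMeasure] {ι : Type*} [Fintype ι] (e : OrthonormalBasis ι ℝ E)
    {U : Set (ℝ × E)} (hU : IsOpen U)
    {Z : ℝ × E → ℝ} (hZ : ContDiffOn ℝ 2 Z U) {t₁ τ r : ℝ} {x₁ : E} (hr : 0 < r) (hτ : 0 < τ)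
    (hQ : backwardCylinder t₁ τ x₁ r ⊆ U)
    (hbottom : ∀ x ∈ closedBall x₁ r, Z (t₁ - τ, x) ≤ 0)
    (hlateral : ∀ t ∈ Icc (t₁ - τ) t₁, ∀ x ∈ sphere x₁ r, Z (t, x) ≤ 0)
    {H : ℝ} (hH : 0 < H) (htop : H ≤ Z (t₁, x₁)) {a b : ℝ}
    (hcontact : ∀ q ∈ contactSet Z (backwardCylinder t₁ τ x₁ r) (H / 4),
      |fderiv ℝ Z q (1, 0)| ≤ a ∧ ∀ i, |fderiv ℝ (fderiv ℝ Z) q (0, e i) (0, e i)| ≤ b) :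
    ENNReal.ofReal (H / 2) * μ (closedBall 0 (H / (4 * r))) ≤
      ENNReal.ofReal (a * ((Fintype.card ι)! * b ^ Fintype.card ι)) *
        (volume.prod μ) (contactSet Z (backwardCylinder t₁ τ x₁ r) (H / 4)) := by
  set G := contactSet Z (backwardCylinder t₁ τ x₁ r) (H / 4)
  have hG : MeasurableSet G := (isClosed_contactSet hU
    (isClosed_Icc.prod isClosed_closedBall) hQ hZ _).measurableSet
  have hcd : ∀ q ∈ G, ContDiffAt ℝ 2 Z q := fun q hq => hZ.contDiffAt (hU.mem_nhds (hQ hq.1))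
  calc ENNReal.ofReal (H / 2) * μ (closedBall 0 (H / (4 * r)))
      = (volume.prod μ) (Icc (H / 2) H ×ˢ closedBall 0 (H / (4 * r))) := by
        rw [Measure.prod_prod, Real.volume_Icc, sub_half]
    _ ≤ (volume.prod μ) (tangentPlane Z x₁ '' G) := measure_mono
        (prod_closedBall_subset_image_tangentPlane hU hZ hr hτ hQ hbottom hlateral hH htop)
    _ ≤ ∫⁻ q in G, ENNReal.ofReal |(tangentPlaneDeriv Z x₁ q).det| ∂volume.prod μ :=
        addHaar_image_le_lintegral_abs_det_fderiv _ hG fun q hq =>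
          (hasFDerivAt_tangentPlane (hcd q hq) x₁).hasFDerivWithinAt
    _ ≤ ∫⁻ _ in G, ENNReal.ofReal (a * ((Fintype.card ι)! * b ^ Fintype.card ι)) ∂volume.prod μ :=
        setLIntegral_mono' hG fun q hq => ENNReal.ofReal_le_ofReal
          (abs_det_tangentPlaneDeriv_le e (hcd q hq) x₁ hq.2.2.2 (hcontact q hq).1
            (hcontact q hq).2)
    _ = _ := setLIntegral_const G _

end ContactSet

section Paraboloid

variable {E : Type*} [NormedAddCommGroup E]

/-- The barrier lying above `1/2` on the backward cylinder with top centre `(t₁, x₁)`, with equality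
at `(t₁, x₁)`, and above `3/2` on the bottom and the lateral boundary of the cylinder. -/
noncomputable def paraboloid (t₁ τ : ℝ) (x₁ : E) (r : ℝ) (q : ℝ × E) : ℝ :=
  ‖q.2 - x₁‖ ^ 2 / r ^ 2 + (t₁ - q.1) / τ + 1 / 2

theorem half_le_paraboloid {t₁ τ r : ℝ} {x₁ : E} (hτ : 0 < τ) {q : ℝ × E} (hq : q.1 ≤ t₁) :
    1 / 2 ≤ paraboloid t₁ τ x₁ r q := by
  have : 0 ≤ ‖q.2 - x₁‖ ^ 2 / r ^ 2 + (t₁ - q.1) / τ :=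
    add_nonneg (by positivity) (div_nonneg (sub_nonneg.2 hq) hτ.le)
  rw [paraboloid]
  linarith

theorem three_halves_le_paraboloid_bottom {t₁ τ r : ℝ} {x₁ : E} (hτ : 0 < τ) (x : E) :
    3 / 2 ≤ paraboloid t₁ τ x₁ r (t₁ - τ, x) := by
  have : 0 ≤ ‖x - x₁‖ ^ 2 / r ^ 2 := by positivity
  rw [paraboloid, sub_sub_cancel, div_self hτ.ne']
  linarith

theorem three_halves_le_paraboloid_lateral {t₁ τ r t : ℝ} {x₁ x : E} (hτ : 0 < τ) (hr : 0 < r)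
    (ht : t ≤ t₁) (hx : x ∈ sphere x₁ r) : 3 / 2 ≤ paraboloid t₁ τ x₁ r (t, x) := by
  have : 0 ≤ (t₁ - t) / τ := div_nonneg (sub_nonneg.2 ht) hτ.le
  rw [paraboloid, mem_sphere_iff_norm.1 hx, div_self (by positivity)]
  linarith

variable [InnerProductSpace ℝ E]

theorem contDiff_paraboloid (t₁ τ : ℝ) (x₁ : E) (r : ℝ) : ContDiff ℝ 2 (paraboloid t₁ τ x₁ r) := by
  have hnorm : ContDiff ℝ 2 (fun q : ℝ × E => ‖q.2 - x₁‖ ^ 2) :=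
    (contDiff_snd.sub contDiff_const).norm_sq ℝ
  unfold paraboloid
  fun_prop

theorem fderiv_paraboloid (t₁ τ : ℝ) (x₁ : E) (r : ℝ) (q : ℝ × E) :
    fderiv ℝ (paraboloid t₁ τ x₁ r) q =
      (2 / r ^ 2) • (innerSL ℝ (q.2 - x₁)).comp (.snd ℝ ℝ E) - τ⁻¹ • .fst ℝ ℝ E := by
  have hspace : HasFDerivAt (fun q : ℝ × E => ‖q.2 - x₁‖ ^ 2 / r ^ 2)
      ((r ^ 2)⁻¹ • (2 • (innerSL ℝ (q.2 - x₁)).comp (.snd ℝ ℝ E))) q := by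
    simpa [div_eq_inv_mul] using ((hasFDerivAt_snd.sub_const x₁).norm_sq).const_mul (r ^ 2)⁻¹
  have htime : HasFDerivAt (fun q : ℝ × E => (t₁ - q.1) / τ) (τ⁻¹ • -.fst ℝ ℝ E) q := by
    simpa [div_eq_inv_mul] using
      ((ContinuousLinearMap.fst ℝ ℝ E).hasFDerivAt.const_sub t₁).const_mul τ⁻¹
  refine ((hspace.add htime).add_const (1 / 2)).fderiv.trans (ContinuousLinearMap.ext fun v => ?_)
  simp only [_root_.add_apply, _root_.sub_apply, _root_.smul_apply, _root_.neg_apply, smul_eq_mul,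
    nsmul_eq_mul, Nat.cast_ofNat]
  ring

theorem fderiv_fderiv_paraboloid_apply_self (t₁ τ : ℝ) (x₁ : E) (r : ℝ) (q : ℝ × E) (y : E) :
    fderiv ℝ (fderiv ℝ (paraboloid t₁ τ x₁ r)) q (0, y) (0, y) = 2 / r ^ 2 * ‖y‖ ^ 2 := by
  have hsecond := differentiableAt_fderiv_of_contDiffAt_two
    (contDiff_paraboloid t₁ τ x₁ r).contDiffAt (q := q)
  have hentry : (fun q => fderiv ℝ (paraboloid t₁ τ x₁ r) q (0, y)) =
      fun q => 2 / r ^ 2 * inner ℝ (q.2 - x₁) y := by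
    ext q
    simp [fderiv_paraboloid, inner_sub_left]
  have hderiv : HasFDerivAt (fun q : ℝ × E => 2 / r ^ 2 * inner ℝ (q.2 - x₁) y)
      ((2 / r ^ 2) • (innerSL ℝ y).comp (.snd ℝ ℝ E)) q := by
    simpa [real_inner_comm, Function.comp_def] using
      ((innerSL ℝ y).hasFDerivAt.comp q (hasFDerivAt_snd.sub_const x₁)).const_mul (2 / r ^ 2)
  have happly := congrArg (· (0, y))
    (((ContinuousLinearMap.apply ℝ ℝ (0, y)).hasFDerivAt.comp q hsecond.hasFDerivAt).unique
      (hentry ▸ hderiv))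
  simpa using happly

end Paraboloid

theorem rpow_inv_mul_rpow {a M m : ℝ} (ha : 0 ≤ a) (hM : 0 ≤ M) (hm : m ≠ 0) :
    (a ^ m⁻¹ * M) ^ m = a * M ^ m := by
  rw [mul_rpow (by positivity) hM, rpow_inv_rpow ha hm]

theorem abs_le_neg_sum_of_nonpos {ι : Type*} [Fintype ι] {a : ι → ℝ} (ha : ∀ i, a i ≤ 0) (i : ι) :
    |a i| ≤ -∑ j, a j := by
  rw [abs_of_nonpos (ha i), ← Finset.sum_neg_distrib]
  exact Finset.single_le_sum (f := fun j => -a j) (fun j _ => neg_nonneg.2 (ha j))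
    (Finset.mem_univ i)

theorem hasDerivAt_comp_prodMk_left {E F : Type*} [NormedAddCommGroup E] [NormedSpace ℝ E]
    [NormedAddCommGroup F] [NormedSpace ℝ F] {f : ℝ × E → F} {t : ℝ} {x : E}
    (hf : DifferentiableAt ℝ f (t, x)) :
    HasDerivAt (fun s => f (s, x)) (fderiv ℝ f (t, x) (1, 0)) t :=
  hf.hasFDerivAt.comp_hasDerivAt t ((hasDerivAt_id t).prodMk (hasDerivAt_const t x))

theorem spaceLap_comp_prodMk_right {d : ℕ} {f : ℝ × EuclideanSpace ℝ (Fin d) → ℝ} {t : ℝ}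
    {x : EuclideanSpace ℝ (Fin d)} (hf : ContDiffAt ℝ 2 f (t, x)) :
    spaceLap (fun y => f (t, y)) x =
      ∑ i, fderiv ℝ (fderiv ℝ f) (t, x) (0, EuclideanSpace.basisFun (Fin d) ℝ i)
        (0, EuclideanSpace.basisFun (Fin d) ℝ i) := by
  have hslice : ContDiffAt ℝ 2 (fun y => f (t, y)) x := hf.comp x (by fun_prop)
  refine Finset.sum_congr rfl fun i _ => ?_
  rw [fderiv_clm_apply (differentiableAt_fderiv_of_contDiffAt_two hslice)
    (differentiableAt_const _), EuclideanSpace.basisFun_apply,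
    ← fderiv_fderiv_comp_prodMk_right hf]
  simp

local notation "ℰ" d:max => EuclideanSpace ℝ (Fin d)

variable {d : ℕ} {m : ℝ} {Q : Set (ℝ × ℰ d)} {u : ℝ → ℰ d → ℝ}

theorem IsFDESol.contDiffOn_rpow (hu : IsFDESol m Q u) (k : ℝ) :
    ContDiffOn ℝ 2 (fun q : ℝ × ℰ d => u q.1 q.2 ^ k) Q :=
  (hu.2.1.of_le (WithTop.coe_le_coe.2 le_top)).rpow_const_of_ne fun q hq => (hu.1 q hq).ne'

theorem IsFDESol.hasDerivAt_rpow (hQ : IsOpen Q) (hu : IsFDESol m Q u) {t : ℝ} {x : ℰ d}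
    (hq : (t, x) ∈ Q) (k : ℝ) :
    HasDerivAt (fun s => u s x ^ k)
      (k * u t x ^ (k - 1) * spaceLap (fun y => u t y ^ m) x) t := by
  have hdiff : DifferentiableAt ℝ (fun q : ℝ × ℰ d => u q.1 q.2) (t, x) :=
    (hu.2.1.contDiffAt (hQ.mem_nhds hq)).differentiableAt (by simp)
  have htime : HasDerivAt (fun s => u s x) (spaceLap (fun y => u t y ^ m) x) t :=
    hu.2.2 (t, x) hq ▸ (hasDerivAt_comp_prodMk_left hdiff).differentiableAt.hasDerivAt
  exact (htime.rpow_const (p := k) (.inl (hu.1 _ hq).ne')).congr_deriv (by ring)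

theorem IsFDESol.fderiv_rpow_apply_time (hQ : IsOpen Q) (hu : IsFDESol m Q u) {q : ℝ × ℰ d}
    (hq : q ∈ Q) (k : ℝ) :
    fderiv ℝ (fun q : ℝ × ℰ d => u q.1 q.2 ^ k) q (1, 0) =
      k * u q.1 q.2 ^ (k - 1) * spaceLap (fun y => u q.1 y ^ m) q.2 :=
  (hasDerivAt_comp_prodMk_left (((hu.contDiffOn_rpow k).contDiffAt
    (hQ.mem_nhds hq)).differentiableAt (by simp))).unique (hu.hasDerivAt_rpow hQ hq k)

section GrowthInCylinder

variable {t₁ τ r M : ℝ} {x₁ : ℰ d} {q : ℝ × ℰ d}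

/-- The excess of `(u / M) ^ m` over the paraboloid, the function to which the contact set
argument is applied. -/
noncomputable def barrierGap (m M : ℝ) (u : ℝ → ℰ d → ℝ) (t₁ τ : ℝ) (x₁ : ℰ d) (r : ℝ)
    (q : ℝ × ℰ d) : ℝ :=
  (M ^ m)⁻¹ * u q.1 q.2 ^ m - paraboloid t₁ τ x₁ r q

theorem IsFDESol.contDiffOn_barrierGap (hu : IsFDESol m Q u) :
    ContDiffOn ℝ 2 (barrierGap m M u t₁ τ x₁ r) Q :=
  (contDiffOn_const.mul (hu.contDiffOn_rpow m)).sub (contDiff_paraboloid t₁ τ x₁ r).contDiffOn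

theorem IsFDESol.fderiv_barrierGap (hQ : IsOpen Q) (hu : IsFDESol m Q u) (hq : q ∈ Q) :
    fderiv ℝ (barrierGap m M u t₁ τ x₁ r) q =
      (M ^ m)⁻¹ • fderiv ℝ (fun q : ℝ × ℰ d => u q.1 q.2 ^ m) q -
        fderiv ℝ (paraboloid t₁ τ x₁ r) q :=
  have hpow := (hu.contDiffOn_rpow m).contDiffAt (hQ.mem_nhds hq)
  have hpar := (contDiff_paraboloid t₁ τ x₁ r).differentiable (by simp) q
  (((hpow.differentiableAt (by simp)).hasFDerivAt.const_mul (M ^ m)⁻¹).sub hpar.hasFDerivAt).fderiv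

theorem IsFDESol.fderiv_fderiv_barrierGap_apply_self (hQ : IsOpen Q) (hu : IsFDESol m Q u)
    (hq : q ∈ Q) (y : ℰ d) :
    fderiv ℝ (fderiv ℝ (barrierGap m M u t₁ τ x₁ r)) q (0, y) (0, y) =
      (M ^ m)⁻¹ * fderiv ℝ (fderiv ℝ fun q : ℝ × ℰ d => u q.1 q.2 ^ m) q (0, y) (0, y) -
        2 / r ^ 2 * ‖y‖ ^ 2 := by
  have hfirst : fderiv ℝ (barrierGap m M u t₁ τ x₁ r) =ᶠ[𝓝 q] fun q =>
      (M ^ m)⁻¹ • fderiv ℝ (fun q : ℝ × ℰ d => u q.1 q.2 ^ m) q -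
        fderiv ℝ (paraboloid t₁ τ x₁ r) q := by
    filter_upwards [hQ.mem_nhds hq] with p hp using hu.fderiv_barrierGap hQ hp
  have hpow := differentiableAt_fderiv_of_contDiffAt_two
    ((hu.contDiffOn_rpow m).contDiffAt (hQ.mem_nhds hq))
  have hpar := differentiableAt_fderiv_of_contDiffAt_two
    (contDiff_paraboloid t₁ τ x₁ r).contDiffAt (q := q)
  rw [hfirst.fderiv_eq, ← fderiv_fderiv_paraboloid_apply_self t₁ τ x₁ r q y]
  exact congrArg (· (0, y) (0, y))
    ((hpow.hasFDerivAt.const_smul (M ^ m)⁻¹).sub hpar.hasFDerivAt).fderiv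

theorem IsFDESol.fderiv_time_barrierGap (hQ : IsOpen Q) (hu : IsFDESol m Q u) (hq : q ∈ Q) :
    fderiv ℝ (barrierGap m M u t₁ τ x₁ r) q (1, 0) =
      m * u q.1 q.2 ^ (m - 1) * (∑ i, fderiv ℝ (fderiv ℝ (barrierGap m M u t₁ τ x₁ r)) q
        (0, EuclideanSpace.basisFun (Fin d) ℝ i) (0, EuclideanSpace.basisFun (Fin d) ℝ i) +
          2 * d / r ^ 2) + 1 / τ := by
  have hpow : ContDiffAt ℝ 2 (fun q : ℝ × ℰ d => u q.1 q.2 ^ m) q :=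
    (hu.contDiffOn_rpow m).contDiffAt (hQ.mem_nhds hq)
  have hlap := spaceLap_comp_prodMk_right (t := q.1) (x := q.2) hpow
  simp only [hu.fderiv_fderiv_barrierGap_apply_self hQ hq, Finset.sum_sub_distrib,
    ← Finset.mul_sum]
  rw [← hlap, hu.fderiv_barrierGap hQ hq, fderiv_paraboloid]
  simp only [hu.fderiv_rpow_apply_time hQ hq, _root_.sub_apply, _root_.smul_apply, smul_eq_mul,
    ContinuousLinearMap.comp_apply, ContinuousLinearMap.coe_snd', map_zero, mul_zero,
    ContinuousLinearMap.coe_fst', mul_one, EuclideanSpace.basisFun_apply, PiLp.norm_single,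
    norm_one, one_pow, Finset.sum_const, Finset.card_univ, Fintype.card_fin, nsmul_eq_mul]
  ring

theorem contact_bounds_of_equation {κ L U D S : ℝ} (hm0 : 0 < m) (hm1 : m < 1) (hM : 0 < M)
    (hr : 0 < r) (hκ : 0 < κ) (hlower : κ * M ≤ U) (hupper : U ≤ L * M) (hD : 0 ≤ D) (hS : S ≤ 0)
    (htime : 0 ≤ m * U ^ (m - 1) * (S + 2 * D / r ^ 2) + 1 / (M ^ (1 - m) * r ^ 2)) :
    m * U ^ (m - 1) * (S + 2 * D / r ^ 2) + 1 / (M ^ (1 - m) * r ^ 2) ≤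
        (2 * D * m * κ ^ (m - 1) + 1) / (M ^ (1 - m) * r ^ 2) ∧
      -S ≤ (2 * D + L ^ (1 - m) / m) / r ^ 2 := by
  have hU : 0 < U := lt_of_lt_of_le (by positivity) hlower
  have hL : 0 ≤ L := (pos_of_mul_pos_left (hU.trans_le hupper) hM.le).le
  have hneg {a : ℝ} (ha : 0 ≤ a) : a ^ (m - 1) = (a ^ (1 - m))⁻¹ := by
    rw [← rpow_neg ha, neg_sub]
  have hUκ : U ^ (m - 1) * M ^ (1 - m) ≤ κ ^ (m - 1) := by
    have := rpow_le_rpow_of_nonpos (by positivity) hlower (by linarith : m - 1 ≤ 0)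
    rwa [mul_rpow hκ.le hM.le, hneg hM.le, ← div_eq_mul_inv, le_div_iff₀ (by positivity)] at this
  have hUL : U ^ (1 - m) ≤ L ^ (1 - m) * M ^ (1 - m) := by
    rw [← mul_rpow hL hM.le]
    exact rpow_le_rpow hU.le hupper (by linarith)
  constructor
  · calc _ ≤ m * U ^ (m - 1) * (2 * D / r ^ 2) + 1 / (M ^ (1 - m) * r ^ 2) := by
          gcongr
          linarith
      _ = (2 * D * m * (U ^ (m - 1) * M ^ (1 - m)) + 1) / (M ^ (1 - m) * r ^ 2) := by
          field_simp
      _ ≤ _ := by gcongr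
  · rw [hneg hU.le] at htime
    calc -S ≤ 2 * D / r ^ 2 + U ^ (1 - m) / (m * (M ^ (1 - m) * r ^ 2)) := by
          have hscaled := mul_nonneg (by positivity : 0 ≤ U ^ (1 - m) / m) htime
          have hexpand : U ^ (1 - m) / m * (m * (U ^ (1 - m))⁻¹ * (S + 2 * D / r ^ 2) +
              1 / (M ^ (1 - m) * r ^ 2)) =
              S + 2 * D / r ^ 2 + U ^ (1 - m) / (m * (M ^ (1 - m) * r ^ 2)) := by
            field_simp
          linarith
      _ ≤ 2 * D / r ^ 2 + L ^ (1 - m) * M ^ (1 - m) / (m * (M ^ (1 - m) * r ^ 2)) := by gcongr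
      _ = _ := by field_simp

theorem IsFDESol.rpow_inv_mul_le_of_barrierGap_nonneg (hu : IsFDESol m Q u) (hm0 : 0 < m)
    (hM : 0 < M) (hτ : 0 < τ) (hq : q ∈ Q) (ht : q.1 ≤ t₁)
    (hgap : 0 ≤ barrierGap m M u t₁ τ x₁ r q) : (1 / 2) ^ m⁻¹ * M ≤ u q.1 q.2 := by
  have hhalf : 1 / 2 ≤ (M ^ m)⁻¹ * u q.1 q.2 ^ m :=
    (half_le_paraboloid hτ ht).trans (sub_nonneg.1 hgap)
  rw [← rpow_le_rpow_iff (by positivity) (hu.1 q hq).le hm0,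
    rpow_inv_mul_rpow (by norm_num) hM.le hm0.ne', ← le_div_iff₀ (by positivity)]
  rwa [inv_mul_eq_div] at hhalf

theorem IsFDESol.abs_fderiv_barrierGap_le_on_contactSet (hQ : IsOpen Q) (hu : IsFDESol m Q u)
    (hm0 : 0 < m) (hm1 : m < 1) (hM : 0 < M) (hr : 0 < r) (hτ : τ = M ^ (1 - m) * r ^ 2)
    (hcyl : backwardCylinder t₁ τ x₁ r ⊆ Q)
    (hbound : ∀ q ∈ backwardCylinder t₁ τ x₁ r, u q.1 q.2 ≤ (3 / 2) ^ m⁻¹ * M) {δ : ℝ}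
    (hδ : 0 ≤ δ)
    (hq : q ∈ contactSet (barrierGap m M u t₁ τ x₁ r) (backwardCylinder t₁ τ x₁ r) δ) :
    |fderiv ℝ (barrierGap m M u t₁ τ x₁ r) q (1, 0)| ≤
        (2 * d * m * ((1 / 2) ^ m⁻¹) ^ (m - 1) + 1) / τ ∧
      ∀ i, |fderiv ℝ (fderiv ℝ (barrierGap m M u t₁ τ x₁ r)) q
        (0, EuclideanSpace.basisFun (Fin d) ℝ i) (0, EuclideanSpace.basisFun (Fin d) ℝ i)| ≤
          (2 * d + ((3 / 2) ^ m⁻¹) ^ (1 - m) / m) / r ^ 2 := by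
  obtain ⟨hqcyl, hgap, htime, hconcave⟩ := hq
  have hτpos : 0 < τ := hτ ▸ by positivity
  have hlower := hu.rpow_inv_mul_le_of_barrierGap_nonneg hm0 hM hτpos (hcyl hqcyl) hqcyl.1.2
    (hδ.trans hgap)
  rw [hu.fderiv_time_barrierGap hQ (hcyl hqcyl)] at htime ⊢
  rw [abs_of_nonneg htime]
  have hentries := abs_le_neg_sum_of_nonpos
    fun i => hconcave (EuclideanSpace.basisFun (Fin d) ℝ i)
  have htrace := Finset.sum_nonpos fun i (_ : i ∈ Finset.univ) =>
    hconcave (EuclideanSpace.basisFun (Fin d) ℝ i)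
  rw [hτ] at htime hentries htrace ⊢
  obtain ⟨ha, hb⟩ := contact_bounds_of_equation hm0 hm1 hM hr (by positivity) hlower
    (hbound q hqcyl) (Nat.cast_nonneg d) htrace htime
  exact ⟨ha, fun i => (hentries i).trans hb⟩

theorem IsFDESol.half_mul_volume_closedBall_le (hQ : IsOpen Q) (hu : IsFDESol m Q u) (hm0 : 0 < m)
    (hm1 : m < 1) (hM : 0 < M) (hr : 0 < r) (hτ : τ = M ^ (1 - m) * r ^ 2) (htop : u t₁ x₁ = M)
    (hcyl : backwardCylinder t₁ τ x₁ r ⊆ Q)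
    (hbound : ∀ q ∈ backwardCylinder t₁ τ x₁ r, u q.1 q.2 ≤ (3 / 2) ^ m⁻¹ * M) :
    ENNReal.ofReal (1 / 2 / 2) * volume (closedBall (0 : ℰ d) (1 / 2 / (4 * r))) ≤
      ENNReal.ofReal ((2 * d * m * ((1 / 2) ^ m⁻¹) ^ (m - 1) + 1) / τ *
          (d ! * ((2 * d + ((3 / 2) ^ m⁻¹) ^ (1 - m) / m) / r ^ 2) ^ d)) *
        volume (backwardCylinder t₁ τ x₁ r ∩ {q | (1 / 2) ^ m⁻¹ * M ≤ u q.1 q.2}) := by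
  have hτpos : 0 < τ := hτ ▸ by positivity
  have hpow : ∀ q ∈ backwardCylinder t₁ τ x₁ r, (M ^ m)⁻¹ * u q.1 q.2 ^ m ≤ 3 / 2 := by
    intro q hq
    have := rpow_le_rpow (hu.1 q (hcyl hq)).le (hbound q hq) hm0.le
    rw [rpow_inv_mul_rpow (by norm_num) hM.le hm0.ne'] at this
    rwa [inv_mul_le_iff₀ (by positivity), mul_comm]
  have hmeasure := prod_closedBall_measure_le_contactSet volume (EuclideanSpace.basisFun (Fin d) ℝ)
    hQ (hu.contDiffOn_barrierGap (M := M) (t₁ := t₁) (τ := τ) (x₁ := x₁) (r := r)) hr hτpos hcyl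
    (fun x hx => sub_nonpos.2 <| (hpow (t₁ - τ, x) ⟨⟨le_rfl, by linarith⟩, hx⟩).trans
      (three_halves_le_paraboloid_bottom hτpos x))
    (fun t ht x hx => sub_nonpos.2 <| (hpow (t, x) ⟨ht, sphere_subset_closedBall hx⟩).trans
      (three_halves_le_paraboloid_lateral hτpos hr ht.2 hx))
    (H := 1 / 2) (by norm_num)
    (by
      rw [barrierGap, htop, inv_mul_cancel₀ (by positivity)]
      norm_num [paraboloid])
    fun q hq => hu.abs_fderiv_barrierGap_le_on_contactSet hQ hm0 hm1 hM hr hτ hcyl hbound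
      (by norm_num) hq
  rw [Fintype.card_fin, ← Measure.volume_eq_prod] at hmeasure
  refine hmeasure.trans ?_
  gcongr
  intro q hq
  refine ⟨hq.1, ?_⟩
  exact hu.rpow_inv_mul_le_of_barrierGap_nonneg hm0 hM hτpos (hcyl hq.1) hq.1.1.2
    (le_trans (by norm_num) hq.2.1)

theorem IsFDESol.exists_volume_superlevel_ge (d : ℕ) {m : ℝ} (hm0 : 0 < m) (hm1 : m < 1) :
    ∃ c : ℝ, 0 < c ∧ ∀ {Q : Set (ℝ × ℰ d)} {u : ℝ → ℰ d → ℝ} {t₁ τ r M : ℝ} {x₁ : ℰ d},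
      IsOpen Q → IsFDESol m Q u → 0 < M → 0 < r → τ = M ^ (1 - m) * r ^ 2 → u t₁ x₁ = M →
      backwardCylinder t₁ τ x₁ r ⊆ Q →
      (∀ q ∈ backwardCylinder t₁ τ x₁ r, u q.1 q.2 ≤ (3 / 2) ^ m⁻¹ * M) →
      ENNReal.ofReal (c * (τ * r ^ d)) ≤
        volume (backwardCylinder t₁ τ x₁ r ∩ {q | (1 / 2) ^ m⁻¹ * M ≤ u q.1 q.2}) := by
  set a : ℝ := 2 * d * m * ((1 / 2) ^ m⁻¹) ^ (m - 1) + 1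
  set b : ℝ := 2 * d + ((3 / 2) ^ m⁻¹) ^ (1 - m) / m
  set V : ℝ := volume.real (ball (0 : ℰ d) 1)
  have ha : 0 < a := by positivity
  have hb : 0 < b := by positivity
  have hV : 0 < V := ENNReal.toReal_pos (measure_ball_pos _ _ one_pos).ne' measure_ball_lt_top.ne
  refine ⟨1 / 4 * ((1 / 8) ^ d * V) / (a * (d ! * b ^ d)), by positivity, ?_⟩
  intro Q u t₁ τ r M x₁ hQ hu hM hr hτ htop hcyl hbound
  have hτpos : 0 < τ := hτ ▸ by positivity
  have hball : volume (closedBall (0 : ℰ d) (1 / 2 / (4 * r))) =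
      ENNReal.ofReal ((1 / 2 / (4 * r)) ^ d * V) := by
    rw [Measure.addHaar_closedBall _ _ (by positivity), finrank_euclideanSpace_fin,
      ENNReal.ofReal_mul (by positivity), ofReal_measureReal measure_ball_lt_top.ne]
  have hmeasure : _ ≤ ENNReal.ofReal (a / τ * (d ! * (b / r ^ 2) ^ d)) * _ :=
    hu.half_mul_volume_closedBall_le hQ hm0 hm1 hM hr hτ htop hcyl hbound
  rw [hball, ← ENNReal.ofReal_mul (by positivity)] at hmeasure
  have hdiv := ENNReal.div_le_of_le_mul' hmeasure
  rw [← ENNReal.ofReal_div_of_pos (by positivity)] at hdiv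
  refine (ENNReal.ofReal_le_ofReal (le_of_eq ?_)).trans hdiv
  have hr2 : (r ^ 2) ^ d = r ^ d * r ^ d := by rw [pow_right_comm, sq]
  have h8 : (8 : ℝ) ^ d = 2 ^ d * 4 ^ d := by rw [← mul_pow]; norm_num
  clear_value a b V
  simp only [div_pow, mul_pow, one_pow, hr2, h8]
  field_simp
  norm_num

end GrowthInCylinder

section CompactlySupportedWeights

theorem continuous_mul_of_tsupport_subset {X : Type*} [TopologicalSpace X] {Ω : Set X}
    {f η : X → ℝ} (hΩ : IsOpen Ω) (hf : ContinuousOn f Ω) (hη : Continuous η)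
    (hsupp : tsupport η ⊆ Ω) : Continuous fun x => f x * η x :=
  continuous_of_tsupport fun _ hx =>
    (hf.continuousAt (hΩ.mem_nhds (hsupp (tsupport_mul_subset_right hx)))).mul hη.continuousAt

theorem mul_nonneg_of_tsupport_subset {X : Type*} [TopologicalSpace X] {Ω : Set X} {f η : X → ℝ}
    (hf : ∀ x ∈ Ω, 0 ≤ f x) (hη : ∀ x, 0 ≤ η x) (hsupp : tsupport η ⊆ Ω) (x : X) :
    0 ≤ f x * η x := by
  by_cases hx : x ∈ tsupport η
  · exact mul_nonneg (hf x (hsupp hx)) (hη x)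
  · rw [image_eq_zero_of_notMem_tsupport hx, mul_zero]

variable {E : Type*} [NormedAddCommGroup E] [MeasurableSpace E] [BorelSpace E] {μ : Measure E}
  [IsFiniteMeasureOnCompacts μ] {Ω : Set E} {η : E → ℝ}

theorem integrable_mul_of_tsupport_subset {f : E → ℝ} (hΩ : IsOpen Ω) (hf : ContinuousOn f Ω)
    (hη : Continuous η) (hcomp : HasCompactSupport η) (hsupp : tsupport η ⊆ Ω) :
    Integrable (fun x => f x * η x) μ :=
  (continuous_mul_of_tsupport_subset hΩ hf hη hsupp).integrable_of_hasCompactSupport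
    hcomp.mul_left

theorem continuousOn_integral_mul {S : Set ℝ} {f : ℝ × E → ℝ} (hΩ : IsOpen Ω)
    (hf : ContinuousOn f (S ×ˢ Ω)) (hη : Continuous η) (hcomp : HasCompactSupport η)
    (hsupp : tsupport η ⊆ Ω) : ContinuousOn (fun s => ∫ x, f (s, x) * η x ∂μ) S := by
  refine continuousOn_integral_of_compact_support (f := fun s x => f (s, x) * η x) hcomp.isCompact
    ?_ fun s x _ hx => by rw [image_eq_zero_of_notMem_tsupport hx, mul_zero]
  rintro ⟨s, x⟩ ⟨hs, -⟩
  by_cases hx : x ∈ tsupport η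
  · have hnhds : (univ : Set ℝ) ×ˢ Ω ∈ 𝓝 (s, x) :=
      (isOpen_univ.prod hΩ).mem_nhds ⟨mem_univ s, hsupp hx⟩
    refine ((hf (s, x) ⟨hs, hsupp hx⟩).mono_of_mem_nhdsWithin ?_).mul
      (hη.comp continuous_snd).continuousWithinAt
    filter_upwards [self_mem_nhdsWithin, mem_nhdsWithin_of_mem_nhds hnhds] with q hqS hqΩ
      using ⟨hqS.1, hqΩ.2⟩
  · have hnhds : (univ : Set ℝ) ×ˢ (tsupport η)ᶜ ∈ 𝓝 (s, x) :=
      (isOpen_univ.prod (isClosed_tsupport η).isOpen_compl).mem_nhds ⟨mem_univ s, hx⟩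
    refine (continuousAt_const.congr (f := fun _ => (0 : ℝ)) ?_).continuousWithinAt
    filter_upwards [hnhds] with q hq
    simp only [Function.uncurry, image_eq_zero_of_notMem_tsupport hq.2, mul_zero]

variable [NormedSpace ℝ E]

theorem hasDerivAt_integral_mul {a b t : ℝ} {f : ℝ × E → ℝ} (hΩ : IsOpen Ω)
    (hf : ContDiffOn ℝ 1 f (Ioo a b ×ˢ Ω)) (hη : Continuous η) (hcomp : HasCompactSupport η)
    (hsupp : tsupport η ⊆ Ω) (ht : t ∈ Ioo a b) :
    HasDerivAt (fun s => ∫ x, f (s, x) * η x ∂μ) (∫ x, fderiv ℝ f (t, x) (1, 0) * η x ∂μ) t := by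
  have hopen : IsOpen (Ioo a b ×ˢ Ω) := isOpen_Ioo.prod hΩ
  obtain ⟨ε, hε, hsub⟩ := Metric.nhds_basis_closedBall.mem_iff.1 (isOpen_Ioo.mem_nhds ht)
  have hderiv : ContinuousOn (fun q => fderiv ℝ f q (1, 0)) (Ioo a b ×ˢ Ω) :=
    (hf.continuousOn_fderiv_of_isOpen hopen le_rfl).clm_apply continuousOn_const
  obtain ⟨C, hC⟩ := ((isCompact_closedBall t ε).prod hcomp.isCompact).exists_bound_of_continuousOn
    (hderiv.mono (prod_mono hsub hsupp))
  have hslice {s : ℝ} (hs : s ∈ Ioo a b) {g : ℝ × E → ℝ} (hg : ContinuousOn g (Ioo a b ×ˢ Ω)) :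
      Integrable (fun x => g (s, x) * η x) μ :=
    integrable_mul_of_tsupport_subset hΩ (hg.comp (by fun_prop) fun x hx => ⟨hs, hx⟩) hη hcomp hsupp
  refine (hasDerivAt_integral_of_dominated_loc_of_deriv_le (F := fun s x => f (s, x) * η x)
    (F' := fun s x => fderiv ℝ f (s, x) (1, 0) * η x) (bound := fun x => C * ‖η x‖)
    (closedBall_mem_nhds t hε) ?_ (hslice ht hf.continuousOn)
    (hslice ht hderiv).aestronglyMeasurable (.of_forall fun x s hs => ?_)
    ((hη.norm.integrable_of_hasCompactSupport hcomp.norm).const_mul C)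
    (.of_forall fun x s hs => ?_)).2
  · filter_upwards [isOpen_Ioo.mem_nhds ht] with s hs
    exact (hslice hs hf.continuousOn).aestronglyMeasurable
  · by_cases hx : x ∈ tsupport η
    · rw [norm_mul]
      gcongr
      exact hC (s, x) ⟨hs, hx⟩
    · simp [image_eq_zero_of_notMem_tsupport hx]
  · by_cases hx : x ∈ tsupport η
    · exact (hasDerivAt_comp_prodMk_left ((hf.differentiableOn (by simp)).differentiableAt
        (hopen.mem_nhds ⟨hsub hs, hsupp hx⟩))).mul_const _
    · simpa only [image_eq_zero_of_notMem_tsupport hx, mul_zero] using hasDerivAt_const s (0 : ℝ)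

theorem integral_mul_fderiv_eq_neg_of_tsupport_subset [FiniteDimensional ℝ E] {ν : Measure E}
    [ν.IsAddHaarMeasure] {f : E → ℝ} (hΩ : IsOpen Ω) (hf : ContDiffOn ℝ 1 f Ω)
    (hη : ContDiff ℝ 1 η) (hcomp : HasCompactSupport η) (hsupp : tsupport η ⊆ Ω) (e : E) :
    ∫ x, f x * fderiv ℝ η x e ∂ν = -∫ x, fderiv ℝ f x e * η x ∂ν :=
  have hderiv : ContinuousOn (fun x => fderiv ℝ f x e) Ω :=
    (hf.continuousOn_fderiv_of_isOpen hΩ le_rfl).clm_apply continuousOn_const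
  have hηderiv : Continuous fun x => fderiv ℝ η x e :=
    (hη.continuous_fderiv (by simp)).clm_apply continuous_const
  integral_mul_fderiv_eq_neg_fderiv_mul_of_integrable
    (integrable_mul_of_tsupport_subset hΩ hderiv hη.continuous hcomp hsupp)
    (integrable_mul_of_tsupport_subset hΩ hf.continuousOn hηderiv (hcomp.fderiv_apply ℝ e)
      ((tsupport_fderiv_apply_subset ℝ e).trans hsupp))
    (integrable_mul_of_tsupport_subset hΩ hf.continuousOn hη.continuous hcomp hsupp)
    (fun _ hx => (hf.differentiableOn (by simp)).differentiableAt (hΩ.mem_nhds (hsupp hx)))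
    fun x _ => hη.differentiable (by simp) x

end CompactlySupportedWeights

section Laplacian

variable {Ω : Set (ℰ d)} {f g η : ℰ d → ℝ} {x : ℰ d}

theorem spaceLap_congr (h : f =ᶠ[𝓝 x] g) : spaceLap f x = spaceLap g x :=
  Finset.sum_congr rfl fun i _ => by
    have hfirst : (fun y => fderiv ℝ f y (EuclideanSpace.single i 1)) =ᶠ[𝓝 x]
        fun y => fderiv ℝ g y (EuclideanSpace.single i 1) := by
      filter_upwards [h.fderiv (𝕜 := ℝ)] with y hy
      rw [hy]
    rw [hfirst.fderiv_eq]

theorem spaceLap_const_mul (c : ℝ) (f : ℰ d → ℝ) (x : ℰ d) :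
    spaceLap (fun y => c * f y) x = c * spaceLap f x := by
  have hderiv (g : ℰ d → ℝ) (y : ℰ d) : fderiv ℝ (fun y => c * g y) y = c • fderiv ℝ g y :=
    congrFun (fderiv_const_smul_field c (f := g)) y
  simp only [spaceLap, Finset.mul_sum, hderiv, _root_.smul_apply, smul_eq_mul]

theorem spaceLap_comp_smul_sub (f : ℰ d → ℝ) (x₀ x : ℰ d) (a : ℝ) :
    spaceLap (fun y => f (a • (y - x₀))) x = a ^ 2 * spaceLap f (a • (x - x₀)) := by
  have hderiv (g : ℰ d → ℝ) (y : ℰ d) :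
      fderiv ℝ (fun y => g (a • (y - x₀))) y = a • fderiv ℝ g (a • (y - x₀)) := by
    rw [fderiv_comp_sub (f := fun z => g (a • z)), fderiv_comp_smul]
  have hmul (g : ℰ d → ℝ) (y : ℰ d) : fderiv ℝ (fun y => a * g y) y = a • fderiv ℝ g y :=
    congrFun (fderiv_const_smul_field a (f := g)) y
  simp only [spaceLap, Finset.mul_sum, hderiv, hmul, _root_.smul_apply, smul_eq_mul,
    fun e : ℰ d => hderiv fun z => fderiv ℝ f z e, sq, mul_assoc]

theorem continuousOn_spaceLap (hΩ : IsOpen Ω) (hf : ContDiffOn ℝ 2 f Ω) :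
    ContinuousOn (spaceLap f) Ω :=
  continuousOn_finsetSum _ fun _ _ =>
    (((hf.fderiv_of_isOpen hΩ (m := 1) (by norm_num)).clm_apply
      contDiffOn_const).continuousOn_fderiv_of_isOpen hΩ le_rfl).clm_apply continuousOn_const

theorem tsupport_spaceLap_subset : tsupport (spaceLap η) ⊆ tsupport η := by
  refine closure_minimal (fun x hx => ?_) (isClosed_tsupport η)
  contrapose! hx
  rw [Function.notMem_support, spaceLap_congr (notMem_tsupport_iff_eventuallyEq.1 hx)]
  simp [spaceLap]

theorem integral_spaceLap_mul (hΩ : IsOpen Ω) (hf : ContDiffOn ℝ 2 f Ω) (hη : ContDiff ℝ 2 η)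
    (hcomp : HasCompactSupport η) (hsupp : tsupport η ⊆ Ω) :
    ∫ x, spaceLap f x * η x = ∫ x, f x * spaceLap η x := by
  have hf' (e : ℰ d) : ContDiffOn ℝ 1 (fun x => fderiv ℝ f x e) Ω :=
    (hf.fderiv_of_isOpen hΩ (m := 1) (by norm_num)).clm_apply contDiffOn_const
  have hη' (e : ℰ d) : ContDiff ℝ 1 fun x => fderiv ℝ η x e :=
    (hη.fderiv_right (m := 1) (by norm_num)).clm_apply contDiff_const
  have hcomp' (e : ℰ d) : HasCompactSupport fun x => fderiv ℝ η x e := hcomp.fderiv_apply ℝ e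
  have hsupp' (e : ℰ d) : tsupport (fun x => fderiv ℝ η x e) ⊆ Ω :=
    (tsupport_fderiv_apply_subset ℝ e).trans hsupp
  simp only [spaceLap, Finset.sum_mul, Finset.mul_sum]
  rw [integral_finsetSum _ fun i _ => ?_, integral_finsetSum _ fun i _ => ?_]
  · refine Finset.sum_congr rfl fun i _ => ?_
    set e : ℰ d := EuclideanSpace.single i 1
    rw [integral_mul_fderiv_eq_neg_of_tsupport_subset hΩ (hf.of_le (by norm_num)) (hη' e)
      (hcomp' e) (hsupp' e), integral_mul_fderiv_eq_neg_of_tsupport_subset hΩ (hf' e)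
      (hη.of_le (by norm_num)) hcomp hsupp, neg_neg]
  · exact integrable_mul_of_tsupport_subset hΩ hf.continuousOn
      (((hη' _).continuous_fderiv (by simp)).clm_apply continuous_const)
      ((hcomp' _).fderiv_apply ℝ _) ((tsupport_fderiv_apply_subset ℝ _).trans (hsupp' _))
  · exact integrable_mul_of_tsupport_subset hΩ
      (((hf' _).continuousOn_fderiv_of_isOpen hΩ le_rfl).clm_apply continuousOn_const)
      hη.continuous hcomp hsupp

theorem mul_rpow_mul_spaceLap_le_spaceLap_rpow {k : ℝ} (hk : 1 ≤ k) (hf : ContDiffAt ℝ 2 f x)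
    (hpos : 0 < f x) : k * f x ^ (k - 1) * spaceLap f x ≤ spaceLap (fun y => f y ^ k) x := by
  simp only [spaceLap, Finset.mul_sum]
  refine Finset.sum_le_sum fun i _ => ?_
  set e : ℰ d := EuclideanSpace.single i 1
  have hfirst : (fun y => fderiv ℝ (fun y => f y ^ k) y e) =ᶠ[𝓝 x]
      fun y => k * f y ^ (k - 1) * fderiv ℝ f y e := by
    filter_upwards [hf.eventually (by simp), hf.continuousAt.eventually (lt_mem_nhds hpos)]
      with y hy hypos
    rw [((hy.differentiableAt (by simp)).hasFDerivAt.rpow_const (.inl hypos.ne')).fderiv]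
    simp only [_root_.smul_apply, smul_eq_mul]
  have hsecond : HasFDerivAt (fun y => k * f y ^ (k - 1) * fderiv ℝ f y e) _ x :=
    (((hf.differentiableAt (by simp)).hasFDerivAt.rpow_const (.inl hpos.ne')).const_mul k).mul
      (((hf.fderiv_right (m := 1) (by norm_num)).clm_apply contDiffAt_const).differentiableAt
        (by simp)).hasFDerivAt
  have hsquare : 0 ≤ k * ((k - 1) * f x ^ (k - 1 - 1)) * fderiv ℝ f x e ^ 2 := by
    have : 0 ≤ k - 1 := by linarith
    positivity
  rw [hfirst.fderiv_eq, hsecond.fderiv]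
  simp only [_root_.add_apply, _root_.smul_apply, smul_eq_mul]
  linarith

end Laplacian

section Cutoff

variable {β K R : ℝ} {x₀ : ℰ d} {η : ℰ d → ℝ}

/-- A `C²` cutoff equal to `1` on the ball of radius `3R/2` about `x₀` and vanishing off the ball
of radius `2R`. The bound of its Laplacian by a power `β < 1` of the cutoff itself is what lets
Hölder's inequality close the differential inequality for a weighted mass of a solution. -/
structure IsCutoff (β K R : ℝ) (x₀ : ℰ d) (η : ℰ d → ℝ) : Prop where
  contDiff : ContDiff ℝ 2 η
  nonneg : ∀ x, 0 ≤ η x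
  le_one : ∀ x, η x ≤ 1
  eq_one : ∀ x ∈ closedBall x₀ (3 / 2 * R), η x = 1
  eq_zero : ∀ x ∉ ball x₀ (2 * R), η x = 0
  abs_spaceLap_le : ∀ x, |spaceLap η x| ≤ K / R ^ 2 * η x ^ β

theorem spaceLap_pow {f : ℰ d → ℝ} (hf : ContDiff ℝ 2 f) (n : ℕ) (x : ℰ d) :
    spaceLap (fun y => f y ^ (n + 2)) x = f x ^ n * ((n + 2) *
      ((n + 1) * ∑ i, fderiv ℝ f x (EuclideanSpace.single i 1) ^ 2 + f x * spaceLap f x)) := by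
  simp only [spaceLap, Finset.mul_sum, ← Finset.sum_add_distrib]
  refine Finset.sum_congr rfl fun i _ => ?_
  set e : ℰ d := EuclideanSpace.single i 1
  have hfd (y : ℰ d) : HasFDerivAt f (fderiv ℝ f y) y := (hf.differentiable (by simp) y).hasFDerivAt
  have hfirst : (fun y => fderiv ℝ (fun y => f y ^ (n + 2)) y e) =
      fun y => ((n + 2) * f y ^ (n + 1)) * fderiv ℝ f y e := by
    ext y
    rw [((hfd y).pow (n + 2)).fderiv]
    simp [nsmul_eq_mul]
  have hsecond : HasFDerivAt (fun y => ((n + 2) * f y ^ (n + 1)) * fderiv ℝ f y e) _ x :=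
    (((hfd x).pow (n + 1)).const_mul ((n : ℝ) + 2)).mul
      (((hf.fderiv_right (m := 1) (by norm_num)).clm_apply contDiff_const).differentiable
        (by simp) x).hasFDerivAt
  rw [hfirst, hsecond.fderiv]
  simp only [_root_.add_apply, _root_.smul_apply, smul_eq_mul, nsmul_eq_mul]
  push_cast
  ring

theorem exists_abs_spaceLap_pow_le {f : ℰ d → ℝ} (hf : ContDiff ℝ 2 f) (hcomp : HasCompactSupport f)
    (n : ℕ) : ∃ K, 0 < K ∧ ∀ x, |spaceLap (fun y => f y ^ (n + 2)) x| ≤ K * |f x| ^ n := by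
  set S : ℰ d → ℝ := fun x => (n + 2) *
    ((n + 1) * ∑ i, fderiv ℝ f x (EuclideanSpace.single i 1) ^ 2 + f x * spaceLap f x)
  have hlap : Continuous (spaceLap f) :=
    continuousOn_univ.1 (continuousOn_spaceLap isOpen_univ hf.contDiffOn)
  have hderiv (e : ℰ d) : Continuous fun x => fderiv ℝ f x e :=
    (hf.continuous_fderiv (by simp)).clm_apply continuous_const
  have hcont : Continuous S := by
    have := hf.continuous
    fun_prop
  have hScomp : HasCompactSupport S := .intro hcomp.isCompact fun x hx => by
    simp [S, image_eq_zero_of_notMem_tsupport hx, fderiv_of_notMem_tsupport ℝ hx]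
  obtain ⟨C, hC⟩ := hScomp.exists_bound_of_continuous hcont
  refine ⟨C + 1, by linarith [(norm_nonneg _).trans (hC 0)], fun x => ?_⟩
  rw [spaceLap_pow hf, abs_mul, abs_pow, mul_comm]
  gcongr
  exact (hC x).trans (by linarith)

theorem pow_le_pow_rpow {s : ℝ} {n k : ℕ} (hn : n ≠ 0) (hs0 : 0 ≤ s) (hs1 : s ≤ 1)
    (hk : k * β ≤ n) : s ^ n ≤ (s ^ k) ^ β := by
  rcases hs0.eq_or_lt with rfl | hs
  · rw [zero_pow hn]
    positivity
  · rw [← Real.rpow_natCast, ← Real.rpow_natCast, ← Real.rpow_mul hs0]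
    exact Real.rpow_le_rpow_of_exponent_ge hs hs1 hk

theorem exists_isCutoff_unit (d : ℕ) (hβ : β < 1) :
    ∃ K, 0 < K ∧ ∃ η : ℰ d → ℝ, IsCutoff β K 1 0 η := by
  let ψ : ContDiffBump (0 : ℰ d) := ⟨3 / 2, 2, by norm_num, by norm_num⟩
  obtain ⟨n, hn⟩ := exists_nat_gt (2 / (1 - β))
  have hβ' : 0 < 1 - β := by linarith
  have hn0 : 0 < (n : ℝ) := (by positivity : 0 < 2 / (1 - β)).trans hn
  rw [div_lt_iff₀ hβ'] at hn
  obtain ⟨K, hK, hlap⟩ := exists_abs_spaceLap_pow_le ψ.contDiff ψ.hasCompactSupport n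
  refine ⟨K, hK, fun x => ψ x ^ (n + 2), ψ.contDiff.pow _, fun x => pow_nonneg ψ.nonneg _,
    fun x => pow_le_one₀ ψ.nonneg ψ.le_one, fun x hx => ?_, fun x hx => ?_, fun x => ?_⟩
  · rw [ψ.one_of_mem_closedBall (by simpa [ψ] using hx), one_pow]
  · rw [ψ.zero_of_le_dist (by simpa [ψ] using hx), zero_pow (by simp)]
  · refine (hlap x).trans ?_
    rw [abs_of_nonneg ψ.nonneg, one_pow, div_one]
    gcongr
    refine pow_le_pow_rpow (by exact_mod_cast hn0.ne') ψ.nonneg ψ.le_one ?_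
    push_cast
    linarith

theorem IsCutoff.comp_smul_sub (hη : IsCutoff β K 1 0 η) (hR : 0 < R) (x₀ : ℰ d) :
    IsCutoff β K R x₀ fun x => η (R⁻¹ • (x - x₀)) := by
  have hnorm (x : ℰ d) : ‖R⁻¹ • (x - x₀)‖ = dist x x₀ / R := by
    rw [norm_smul, norm_inv, Real.norm_of_nonneg hR.le, dist_eq_norm, inv_mul_eq_div]
  refine ⟨hη.contDiff.comp (by fun_prop), fun x => hη.nonneg _, fun x => hη.le_one _,
    fun x hx => hη.eq_one _ ?_, fun x hx => hη.eq_zero _ ?_, fun x => ?_⟩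
  · rw [mem_closedBall_zero_iff, hnorm, mul_one, div_le_iff₀ hR]
    exact hx
  · rwa [mem_ball_zero_iff, hnorm, mul_one, div_lt_iff₀ hR]
  · rw [spaceLap_comp_smul_sub, abs_mul, abs_of_nonneg (by positivity), div_eq_mul_inv, ← inv_pow,
      mul_comm K, mul_assoc]
    gcongr
    simpa using hη.abs_spaceLap_le (R⁻¹ • (x - x₀))

theorem exists_isCutoff (d : ℕ) (hβ : β < 1) : ∃ K, 0 < K ∧
    ∀ (x₀ : ℰ d) {R : ℝ}, 0 < R → ∃ η : ℰ d → ℝ, IsCutoff β K R x₀ η := by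
  obtain ⟨K, hK, η, hη⟩ := exists_isCutoff_unit d hβ
  exact ⟨K, hK, fun x₀ _ hR => ⟨_, hη.comp_smul_sub hR x₀⟩⟩

namespace IsCutoff

theorem tsupport_subset (hη : IsCutoff β K R x₀ η) : tsupport η ⊆ closedBall x₀ (2 * R) :=
  closure_minimal (fun x hx => by
    by_contra hball
    exact hx (hη.eq_zero x fun h => hball (ball_subset_closedBall h))) isClosed_closedBall

theorem hasCompactSupport (hη : IsCutoff β K R x₀ η) : HasCompactSupport η :=
  (isCompact_closedBall x₀ (2 * R)).of_isClosed_subset (isClosed_tsupport η) hη.tsupport_subset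

theorem apply_center (hη : IsCutoff β K R x₀ η) (hR : 0 ≤ R) : η x₀ = 1 :=
  hη.eq_one x₀ (mem_closedBall_self (by positivity))

theorem div_sq_nonneg (hη : IsCutoff β K R x₀ η) (hR : 0 ≤ R) : 0 ≤ K / R ^ 2 := by
  simpa only [hη.apply_center hR, Real.one_rpow, mul_one] using
    (abs_nonneg _).trans (hη.abs_spaceLap_le x₀)

end IsCutoff

end Cutoff

section WeightedMass

theorem integral_rpow_le_of_le_one {α : Type*} [MeasurableSpace α] {μ : Measure α}
    [IsFiniteMeasure μ] {f : α → ℝ} {β : ℝ} (hβ0 : 0 ≤ β) (hβ1 : β ≤ 1) (hf : 0 ≤ᵐ[μ] f)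
    (hint : Integrable f μ) (hintβ : Integrable (fun x => f x ^ β) μ) :
    ∫ x, f x ^ β ∂μ ≤ (∫ x, f x ∂μ) ^ β * μ.real univ ^ (1 - β) := by
  rcases eq_or_ne μ 0 with rfl | hμ
  · simp only [integral_zero_measure]
    positivity
  have : NeZero μ := ⟨hμ⟩
  set V := μ.real univ
  have hV : 0 < V := measureReal_univ_pos
  have hjensen : V⁻¹ * ∫ x, f x ^ β ∂μ ≤ (V⁻¹ * ∫ x, f x ∂μ) ^ β := by
    simpa only [average_eq, smul_eq_mul] using (Real.concaveOn_rpow hβ0 hβ1).le_map_average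
      (continuousOn_id.rpow_const fun _ _ => .inr hβ0) isClosed_Ici hf hint hintβ
  calc ∫ x, f x ^ β ∂μ ≤ V * (V⁻¹ * ∫ x, f x ∂μ) ^ β := (inv_mul_le_iff₀ hV).1 hjensen
    _ = (∫ x, f x ∂μ) ^ β * V ^ (1 - β) := by
      rw [Real.mul_rpow (by positivity) (integral_nonneg_of_ae hf), Real.rpow_sub hV,
        Real.rpow_one, Real.inv_rpow hV.le]
      ring

theorem mul_rpow_sub_le_of_hasDerivAt {Y Y' : ℝ → ℝ} {a b β σ N : ℝ} (hab : a ≤ b) (hβ : β < 1)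
    (hY : ContinuousOn Y (Icc a b)) (hpos : ∀ t ∈ Ioo a b, 0 < Y t)
    (hderiv : ∀ t ∈ Ioo a b, HasDerivAt Y (Y' t) t)
    (hle : ∀ t ∈ Ioo a b, σ * Y' t ≤ N * Y t ^ β) :
    σ * (Y b ^ (1 - β) - Y a ^ (1 - β)) ≤ (1 - β) * N * (b - a) := by
  have hβ' : 0 < 1 - β := by linarith
  set Z : ℝ → ℝ := fun t => σ * Y t ^ (1 - β) - (1 - β) * N * t
  have hZ : ∀ t ∈ Ioo a b, HasDerivAt Z
      (σ * (Y' t * (1 - β) * Y t ^ (1 - β - 1)) - (1 - β) * N * 1) t := fun t ht =>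
    (((hderiv t ht).rpow_const (.inl (hpos t ht).ne')).const_mul σ).sub
      ((hasDerivAt_id t).const_mul _)
  have hanti : AntitoneOn Z (Icc a b) := by
    refine antitoneOn_of_deriv_nonpos (convex_Icc a b) ?_ ?_ ?_
    · exact (continuousOn_const.mul (hY.rpow_const fun _ _ => .inr hβ'.le)).sub (by fun_prop)
    · rw [interior_Icc]
      exact fun t ht => (hZ t ht).differentiableAt.differentiableWithinAt
    · rw [interior_Icc]
      intro t ht
      have hY0 := hpos t ht
      have hpow : Y t ^ (1 - β - 1) * Y t ^ β = 1 := by rw [← Real.rpow_add hY0]; simp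
      rw [(hZ t ht).deriv]
      linear_combination (1 - β) * Y t ^ (1 - β - 1) * hle t ht + (1 - β) * N * hpow
  have := hanti (left_mem_Icc.2 hab) (right_mem_Icc.2 hab) hab
  simp only [Z] at this
  linarith

namespace IsCutoff

variable {β K R : ℝ} {x₀ : ℰ d} {η g h : ℰ d → ℝ} {Ω : Set (ℰ d)}

theorem integrable_mul (hη : IsCutoff β K R x₀ η) (hΩ : IsOpen Ω)
    (hball : closedBall x₀ (2 * R) ⊆ Ω) (hg : ContinuousOn g Ω) :
    Integrable fun x => g x * η x :=
  integrable_mul_of_tsupport_subset hΩ hg hη.contDiff.continuous hη.hasCompactSupport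
    (hη.tsupport_subset.trans hball)

theorem integrable_rpow_mul (hη : IsCutoff β K R x₀ η) (hβ0 : 0 < β) (hΩ : IsOpen Ω)
    (hball : closedBall x₀ (2 * R) ⊆ Ω) (hg : ContinuousOn g Ω) :
    Integrable fun x => (g x * η x) ^ β :=
  have hcont := continuous_mul_of_tsupport_subset hΩ hg hη.contDiff.continuous
    (hη.tsupport_subset.trans hball)
  (hcont.rpow_const fun _ => .inr hβ0.le).integrable_of_hasCompactSupport
    (hη.hasCompactSupport.mul_left.comp_left (g := (· ^ β)) (Real.zero_rpow hβ0.ne'))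

theorem integral_rpow_mul_le (hη : IsCutoff β K R x₀ η) (hβ0 : 0 < β) (hβ1 : β ≤ 1)
    (hΩ : IsOpen Ω) (hball : closedBall x₀ (2 * R) ⊆ Ω) (hg : ContinuousOn g Ω)
    (hg0 : ∀ x ∈ Ω, 0 ≤ g x) :
    ∫ x, (g x * η x) ^ β ≤ (∫ x, g x * η x) ^ β * volume.real (ball x₀ (2 * R)) ^ (1 - β) := by
  have hzero (x : ℰ d) (hx : x ∉ ball x₀ (2 * R)) : g x * η x = 0 := by
    rw [hη.eq_zero x hx, mul_zero]
  have hfin : IsFiniteMeasure (volume.restrict (ball x₀ (2 * R))) :=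
    isFiniteMeasure_restrict.2 measure_ball_lt_top.ne
  have hholder := integral_rpow_le_of_le_one (μ := volume.restrict (ball x₀ (2 * R))) hβ0.le hβ1
    (.of_forall (mul_nonneg_of_tsupport_subset hg0 hη.nonneg (hη.tsupport_subset.trans hball)))
    (hη.integrable_mul hΩ hball hg).restrict (hη.integrable_rpow_mul hβ0 hΩ hball hg).restrict
  rwa [setIntegral_eq_integral_of_forall_compl_eq_zero hzero,
    setIntegral_eq_integral_of_forall_compl_eq_zero fun x hx => by
      rw [hzero x hx, Real.zero_rpow hβ0.ne'], measureReal_restrict_apply_univ] at hholder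

theorem integral_mul_spaceLap_le {c : ℝ} (hη : IsCutoff β K R x₀ η) (hβ0 : 0 < β) (hβ1 : β ≤ 1)
    (hR : 0 ≤ R) (hc : 0 ≤ c) (hΩ : IsOpen Ω) (hball : closedBall x₀ (2 * R) ⊆ Ω)
    (hg : ContinuousOn g Ω) (hg0 : ∀ x ∈ Ω, 0 ≤ g x) (hh : ContinuousOn h Ω)
    (hle : ∀ x ∈ Ω, |h x| ≤ c * g x ^ β) :
    ∫ x, h x * spaceLap η x ≤ c * (K / R ^ 2) * volume.real (ball x₀ (2 * R)) ^ (1 - β) *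
      (∫ x, g x * η x) ^ β := by
  have hKR : 0 ≤ K / R ^ 2 := hη.div_sq_nonneg hR
  have hpt (x : ℰ d) : h x * spaceLap η x ≤ c * (K / R ^ 2) * (g x * η x) ^ β := by
    by_cases hx : x ∈ Ω
    · rw [Real.mul_rpow (hg0 x hx) (hη.nonneg x)]
      calc h x * spaceLap η x ≤ |h x| * |spaceLap η x| := by
            rw [← abs_mul]
            exact le_abs_self _
        _ ≤ c * g x ^ β * (K / R ^ 2 * η x ^ β) :=
          mul_le_mul (hle x hx) (hη.abs_spaceLap_le x) (abs_nonneg _)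
            ((abs_nonneg _).trans (hle x hx))
        _ = _ := by ring
    · have hsupp : x ∉ tsupport η := fun h => hx (hball (hη.tsupport_subset h))
      rw [image_eq_zero_of_notMem_tsupport fun h => hsupp (tsupport_spaceLap_subset h),
        image_eq_zero_of_notMem_tsupport hsupp, mul_zero, mul_zero, Real.zero_rpow hβ0.ne',
        mul_zero]
  have hlap : Continuous (spaceLap η) :=
    continuousOn_univ.1 (continuousOn_spaceLap isOpen_univ hη.contDiff.contDiffOn)
  have hsupp : tsupport (spaceLap η) ⊆ tsupport η := tsupport_spaceLap_subset
  calc ∫ x, h x * spaceLap η x ≤ ∫ x, c * (K / R ^ 2) * (g x * η x) ^ β :=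
        integral_mono (integrable_mul_of_tsupport_subset hΩ hh hlap
          (hη.hasCompactSupport.of_isClosed_subset (isClosed_tsupport _) hsupp)
          (hsupp.trans (hη.tsupport_subset.trans hball)))
          ((hη.integrable_rpow_mul hβ0 hΩ hball hg).const_mul _) hpt
    _ = c * (K / R ^ 2) * ∫ x, (g x * η x) ^ β := integral_const_mul _ _
    _ ≤ c * (K / R ^ 2) * ((∫ x, g x * η x) ^ β * volume.real (ball x₀ (2 * R)) ^ (1 - β)) := by
        gcongr
        exact hη.integral_rpow_mul_le hβ0 hβ1 hΩ hball hg hg0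
    _ = _ := by ring

theorem integral_mul_pos (hη : IsCutoff β K R x₀ η) (hR : 0 ≤ R) (hΩ : IsOpen Ω)
    (hball : closedBall x₀ (2 * R) ⊆ Ω) (hg : ContinuousOn g Ω) (hg0 : ∀ x ∈ Ω, 0 < g x) :
    0 < ∫ x, g x * η x := by
  have hsupp := hη.tsupport_subset.trans hball
  refine (continuous_mul_of_tsupport_subset hΩ hg hη.contDiff.continuous
    hsupp).integral_pos_of_hasCompactSupport_nonneg_nonzero hη.hasCompactSupport.mul_left
    (mul_nonneg_of_tsupport_subset (fun x hx => (hg0 x hx).le) hη.nonneg hsupp) (x := x₀) ?_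
  rw [hη.apply_center hR, mul_one]
  exact (hg0 x₀ (hball (mem_closedBall_self (by positivity)))).ne'

theorem integral_mul_le_of_le_spaceLap {c : ℝ} {v : ℰ d → ℝ} (hη : IsCutoff β K R x₀ η)
    (hβ0 : 0 < β) (hβ1 : β ≤ 1) (hR : 0 ≤ R) (hc : 0 ≤ c) (hΩ : IsOpen Ω)
    (hball : closedBall x₀ (2 * R) ⊆ Ω) (hg : ContinuousOn g Ω) (hg0 : ∀ x ∈ Ω, 0 ≤ g x)
    (hh : ContDiffOn ℝ 2 h Ω) (hle : ∀ x ∈ Ω, |h x| ≤ c * g x ^ β) (hv : ContinuousOn v Ω)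
    (hvh : ∀ x ∈ Ω, v x ≤ spaceLap h x) :
    ∫ x, v x * η x ≤ c * (K / R ^ 2) * volume.real (ball x₀ (2 * R)) ^ (1 - β) *
      (∫ x, g x * η x) ^ β := by
  have hsupp := hη.tsupport_subset.trans hball
  calc ∫ x, v x * η x ≤ ∫ x, spaceLap h x * η x := by
        refine integral_mono (hη.integrable_mul hΩ hball hv)
          (hη.integrable_mul hΩ hball (continuousOn_spaceLap hΩ hh)) fun x => ?_
        have := mul_nonneg_of_tsupport_subset (fun x hx => sub_nonneg.2 (hvh x hx)) hη.nonneg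
          hsupp x
        simp only [sub_mul, sub_nonneg] at this
        exact this
    _ = ∫ x, h x * spaceLap η x :=
        integral_spaceLap_mul hΩ hh hη.contDiff hη.hasCompactSupport hsupp
    _ ≤ _ := hη.integral_mul_spaceLap_le hβ0 hβ1 hR hc hΩ hball hg hg0 hh.continuousOn hle

theorem mul_rpow_integral_sub_le {a b c σ : ℝ} {G H : ℝ × ℰ d → ℝ} (hη : IsCutoff β K R x₀ η)
    (hβ0 : 0 < β) (hβ1 : β < 1) (hR : 0 ≤ R) (hc : 0 ≤ c) (hΩ : IsOpen Ω)
    (hball : closedBall x₀ (2 * R) ⊆ Ω) (hab : a ≤ b) (hGcont : ContinuousOn G (Icc a b ×ˢ Ω))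
    (hG : ContDiffOn ℝ 1 G (Ioo a b ×ˢ Ω)) (hGpos : ∀ q ∈ Ioo a b ×ˢ Ω, 0 < G q)
    (hH : ContDiffOn ℝ 2 H (Ioo a b ×ˢ Ω)) (hle : ∀ q ∈ Ioo a b ×ˢ Ω, |H q| ≤ c * G q ^ β)
    (hevol : ∀ t ∈ Ioo a b, ∀ x ∈ Ω,
      σ * fderiv ℝ G (t, x) (1, 0) ≤ spaceLap (fun y => H (t, y)) x) :
    σ * ((∫ x, G (b, x) * η x) ^ (1 - β) - (∫ x, G (a, x) * η x) ^ (1 - β)) ≤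
      (1 - β) * (c * (K / R ^ 2) * volume.real (ball x₀ (2 * R)) ^ (1 - β)) * (b - a) := by
  have hsupp := hη.tsupport_subset.trans hball
  have hslice {t : ℝ} (ht : t ∈ Ioo a b) {F : ℝ × ℰ d → ℝ} (hF : ContinuousOn F (Ioo a b ×ˢ Ω)) :
      ContinuousOn (fun x => F (t, x)) Ω := hF.comp (by fun_prop) fun x hx => ⟨ht, hx⟩
  have hGt : ContinuousOn (fun q => fderiv ℝ G q (1, 0)) (Ioo a b ×ˢ Ω) :=
    (hG.continuousOn_fderiv_of_isOpen (isOpen_Ioo.prod hΩ) le_rfl).clm_apply continuousOn_const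
  refine mul_rpow_sub_le_of_hasDerivAt hab hβ1 (Y := fun t => ∫ x, G (t, x) * η x)
    (continuousOn_integral_mul hΩ hGcont hη.contDiff.continuous hη.hasCompactSupport hsupp)
    (fun t ht => hη.integral_mul_pos hR hΩ hball (hslice ht hG.continuousOn)
      fun x hx => hGpos _ ⟨ht, hx⟩)
    (fun t ht => hasDerivAt_integral_mul hΩ hG hη.contDiff.continuous hη.hasCompactSupport hsupp ht)
    fun t ht => ?_
  rw [← integral_const_mul]
  simp only [← mul_assoc σ]
  exact hη.integral_mul_le_of_le_spaceLap hβ0 hβ1.le hR hc hΩ hball (hslice ht hG.continuousOn)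
    (fun x hx => (hGpos _ ⟨ht, hx⟩).le) (hH.comp (by fun_prop) fun x hx => ⟨ht, hx⟩)
    (fun x hx => hle _ ⟨ht, hx⟩) (continuousOn_const.mul (hslice ht hGt)) (hevol t ht)

end IsCutoff

end WeightedMass

section SolutionUpToEndpoints

/-- A classical solution on `(a, b) × Ω` that is continuous up to the times `a` and `b`. At these
two times it may vanish, which is how both the initial data and the extinction profile enter. -/
structure IsFDESolOnIcc (m a b : ℝ) (Ω : Set (ℰ d)) (u : ℝ → ℰ d → ℝ) : Prop where
  isOpen : IsOpen Ω
  isFDESol : IsFDESol m (Ioo a b ×ˢ Ω) u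
  continuousOn : ContinuousOn (fun q : ℝ × ℰ d => u q.1 q.2) (Icc a b ×ˢ Ω)

variable {a b a' b' t p : ℝ} {Ω : Set (ℰ d)} {x : ℰ d}

theorem IsFDESol.mono {Q' : Set (ℝ × ℰ d)} (hu : IsFDESol m Q u) (hQ : Q' ⊆ Q) :
    IsFDESol m Q' u :=
  ⟨fun q hq => hu.1 q (hQ hq), hu.2.1.mono hQ, fun q hq => hu.2.2 q (hQ hq)⟩

theorem IsFDESol.fderiv_rpow_le_spaceLap_rpow (hΩ : IsOpen Ω) (hu : IsFDESol m (Ioo a b ×ˢ Ω) u)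
    (hm0 : 0 < m) (hp : 1 ≤ p) (ht : t ∈ Ioo a b) (hx : x ∈ Ω) :
    fderiv ℝ (fun q : ℝ × ℰ d => u q.1 q.2 ^ p) (t, x) (1, 0) ≤
      spaceLap (fun y => p * m / (p + m - 1) * u t y ^ (p + m - 1)) x := by
  have hQ : IsOpen (Ioo a b ×ˢ Ω) := isOpen_Ioo.prod hΩ
  have hpos (y : ℰ d) (hy : y ∈ Ω) : 0 < u t y := hu.1 (t, y) ⟨ht, hy⟩
  have hq : 0 < p + m - 1 := by linarith
  have hslice : ContDiffAt ℝ 2 (fun y => u t y ^ m) x :=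
    ((hu.contDiffOn_rpow m).contDiffAt (hQ.mem_nhds ⟨ht, hx⟩)).comp (f := fun y => (t, y)) x
      (by fun_prop)
  have hchain : spaceLap (fun y => u t y ^ (p + m - 1)) x =
      spaceLap (fun y => (u t y ^ m) ^ ((p + m - 1) / m)) x := by
    refine spaceLap_congr ?_
    filter_upwards [hΩ.mem_nhds hx] with y hy
    rw [← rpow_mul (hpos y hy).le, mul_div_cancel₀ _ hm0.ne']
  have hexp : (u t x ^ m) ^ ((p + m - 1) / m - 1) = u t x ^ (p - 1) := by
    rw [← rpow_mul (hpos x hx).le]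
    congr 1
    field_simp
    ring
  have hconvex := mul_rpow_mul_spaceLap_le_spaceLap_rpow (k := (p + m - 1) / m)
    ((one_le_div hm0).2 (by linarith)) hslice (rpow_pos_of_pos (hpos x hx) m)
  rw [hexp] at hconvex
  rw [hu.fderiv_rpow_apply_time hQ ⟨ht, hx⟩, spaceLap_const_mul, hchain]
  calc p * u t x ^ (p - 1) * spaceLap (fun y => u t y ^ m) x
      = p * m / (p + m - 1) *
          ((p + m - 1) / m * u t x ^ (p - 1) * spaceLap (fun y => u t y ^ m) x) := by field_simp
    _ ≤ _ := by gcongr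

namespace IsFDESolOnIcc

theorem mono (hu : IsFDESolOnIcc m a b Ω u) (ha : a ≤ a') (hb : b' ≤ b) :
    IsFDESolOnIcc m a' b' Ω u :=
  ⟨hu.isOpen, hu.isFDESol.mono (prod_mono (Ioo_subset_Ioo ha hb) Subset.rfl),
    hu.continuousOn.mono (prod_mono (Icc_subset_Icc ha hb) Subset.rfl)⟩

theorem continuousOn_slice (hu : IsFDESolOnIcc m a b Ω u) (ht : t ∈ Icc a b) :
    ContinuousOn (u t) Ω :=
  hu.continuousOn.comp (f := fun x => (t, x)) (by fun_prop) fun _ hx => ⟨ht, hx⟩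

theorem nonneg (hu : IsFDESolOnIcc m a b Ω u) (hab : a < b) (ht : t ∈ Icc a b) (hx : x ∈ Ω) :
    0 ≤ u t x := by
  have hmaps : MapsTo (fun s => u s x) (Ioo a b) (Ici 0) := fun s hs =>
    (hu.isFDESol.1 (s, x) ⟨hs, hx⟩).le
  have hcont : ContinuousOn (fun s => u s x) (closure (Ioo a b)) := by
    rw [closure_Ioo hab.ne]
    exact hu.continuousOn.comp (f := fun s => (s, x)) (by fun_prop) fun s hs => ⟨hs, hx⟩
  have hclosure := hmaps.closure_of_continuousOn hcont
  rw [closure_Ioo hab.ne, isClosed_Ici.closure_eq] at hclosure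
  exact hclosure ht

variable {K R : ℝ} {x₀ : ℰ d} {η : ℰ d → ℝ}

theorem rpow_integral_rpow_mul_le (hu : IsFDESolOnIcc m a b Ω u) (hm0 : 0 < m) (hm1 : m < 1)
    (hp : 1 ≤ p) (hη : IsCutoff (1 - (1 - m) / p) K R x₀ η) (hR : 0 ≤ R)
    (hball : closedBall x₀ (2 * R) ⊆ Ω) (hab : a ≤ b) :
    (∫ x, u b x ^ p * η x) ^ ((1 - m) / p) ≤ (∫ x, u a x ^ p * η x) ^ ((1 - m) / p) +
      (1 - m) / p * (p * m / (p + m - 1) * (K / R ^ 2) *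
        volume.real (ball x₀ (2 * R)) ^ ((1 - m) / p)) * (b - a) := by
  have hp0 : 0 < p := by linarith
  have hq : 0 < p + m - 1 := by linarith
  have hα0 : 0 < (1 - m) / p := div_pos (by linarith) hp0
  have hα1 : (1 - m) / p < 1 := (div_lt_one hp0).2 (by linarith)
  have hcmp (q : ℝ × ℰ d) (hmem : q ∈ Ioo a b ×ˢ Ω) :
      |p * m / (p + m - 1) * u q.1 q.2 ^ (p + m - 1)| ≤
        p * m / (p + m - 1) * (u q.1 q.2 ^ p) ^ (1 - (1 - m) / p) := by
    have hpos : 0 < u q.1 q.2 := hu.isFDESol.1 q hmem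
    rw [abs_of_nonneg (by positivity), ← rpow_mul hpos.le, mul_sub, mul_div_cancel₀ _ hp0.ne']
    ring_nf
    rfl
  have hineq := hη.mul_rpow_integral_sub_le (σ := 1) (c := p * m / (p + m - 1))
    (G := fun q => u q.1 q.2 ^ p) (H := fun q => p * m / (p + m - 1) * u q.1 q.2 ^ (p + m - 1))
    (by linarith) (by linarith) hR (by positivity) hu.isOpen hball hab
    (hu.continuousOn.rpow_const fun _ _ => .inr hp0.le)
    ((hu.isFDESol.contDiffOn_rpow p).of_le (by norm_num))
    (fun q hmem => rpow_pos_of_pos (hu.isFDESol.1 q hmem) p)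
    (contDiffOn_const.mul (hu.isFDESol.contDiffOn_rpow _)) hcmp fun t ht x hx => by
      rw [one_mul]
      exact hu.isFDESol.fderiv_rpow_le_spaceLap_rpow hu.isOpen hm0 hp ht hx
  rw [one_mul, sub_sub_cancel] at hineq
  linarith

theorem rpow_integral_mul_le_of_eq_zero (hu : IsFDESolOnIcc m a b Ω u) (hm0 : 0 < m) (hm1 : m < 1)
    (hη : IsCutoff m K R x₀ η) (hR : 0 ≤ R) (hball : closedBall x₀ (2 * R) ⊆ Ω) (hab : a ≤ b)
    (hb : ∀ x ∈ Ω, u b x = 0) :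
    (∫ x, u a x * η x) ^ (1 - m) ≤
      (1 - m) * (K / R ^ 2 * volume.real (ball x₀ (2 * R)) ^ (1 - m)) * (b - a) := by
  have hevol (t : ℝ) (ht : t ∈ Ioo a b) (x : ℰ d) (hx : x ∈ Ω) :
      -1 * fderiv ℝ (fun q : ℝ × ℰ d => u q.1 q.2) (t, x) (1, 0) ≤
        spaceLap (fun y => -1 * u t y ^ m) x := by
    have htime := hu.isFDESol.fderiv_rpow_apply_time (isOpen_Ioo.prod hu.isOpen)
      (q := (t, x)) ⟨ht, hx⟩ 1
    simp only [rpow_one, sub_self, rpow_zero, one_mul] at htime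
    rw [htime, spaceLap_const_mul]
  have hfinal : ∫ x, u b x * η x = 0 := by
    rw [← setIntegral_eq_integral_of_forall_compl_eq_zero (s := ball x₀ (2 * R)) fun x hx => by
      rw [hη.eq_zero x hx, mul_zero]]
    exact setIntegral_eq_zero_of_forall_eq_zero fun x hx => by
      rw [hb x (hball (ball_subset_closedBall hx)), zero_mul]
  have hineq := hη.mul_rpow_integral_sub_le (σ := -1) (c := 1) (G := fun q => u q.1 q.2)
    (H := fun q => -1 * u q.1 q.2 ^ m) hm0 hm1 hR zero_le_one hu.isOpen hball hab hu.continuousOn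
    (hu.isFDESol.2.1.of_le (by norm_num)) hu.isFDESol.1
    (contDiffOn_const.mul (hu.isFDESol.contDiffOn_rpow m))
    (fun q hq => by
      rw [abs_mul, abs_neg, abs_one, abs_of_pos (rpow_pos_of_pos (hu.isFDESol.1 q hq) m)]) hevol
  rw [hfinal, zero_rpow (by linarith)] at hineq
  linarith

end IsFDESolOnIcc

end SolutionUpToEndpoints

section IntegralsOverBalls

variable {β K R p : ℝ} {x₀ : ℰ d} {Ω : Set (ℰ d)} {g η : ℰ d → ℝ}

theorem volume_real_ball_rpow (x₀ : ℰ d) {k : ℝ} (hk : 0 < k) (hR : 0 < R) (α : ℝ) :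
    volume.real (ball x₀ (k * R)) ^ α =
      (k ^ d * volume.real (ball (0 : ℰ d) 1)) ^ α * R ^ (d * α) := by
  have hvol : volume.real (ball x₀ (k * R)) = (k * R) ^ d * volume.real (ball (0 : ℰ d) 1) := by
    rw [Measure.real, Measure.addHaar_ball_of_pos volume x₀ (by positivity), ENNReal.toReal_mul,
      ENNReal.toReal_ofReal (by positivity), finrank_euclideanSpace_fin, Measure.real]
  rw [hvol, mul_pow, mul_right_comm, mul_rpow (by positivity) (by positivity), rpow_mul hR.le,
    rpow_natCast]

theorem volume_real_ball_one_pos (d : ℕ) : 0 < volume.real (ball (0 : ℰ d) 1) :=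
  ENNReal.toReal_pos (measure_ball_pos volume _ one_pos).ne' measure_ball_lt_top.ne

theorem integrableOn_ball_of_continuousOn (hg : ContinuousOn g (closedBall x₀ R)) :
    IntegrableOn g (ball x₀ R) :=
  (hg.integrableOn_compact (isCompact_closedBall x₀ R)).mono_set ball_subset_closedBall

theorem setIntegral_ball_nonneg (hg0 : ∀ x ∈ closedBall x₀ R, 0 ≤ g x) :
    0 ≤ ∫ x in ball x₀ R, g x :=
  setIntegral_nonneg measurableSet_ball fun x hx => hg0 x (ball_subset_closedBall hx)

theorem setIntegral_le_setIntegral_ball {s : Set (ℰ d)} (hg : ContinuousOn g (closedBall x₀ R))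
    (hg0 : ∀ x ∈ closedBall x₀ R, 0 ≤ g x) (hs : s ⊆ ball x₀ R) :
    ∫ x in s, g x ≤ ∫ x in ball x₀ R, g x :=
  setIntegral_mono_set (integrableOn_ball_of_continuousOn hg)
    (ae_restrict_of_forall_mem measurableSet_ball fun x hx => hg0 x (ball_subset_closedBall hx))
    hs.eventuallyLE

theorem setIntegral_ball_le_rpow_mul_volume (hp : 1 ≤ p)
    (hg : ContinuousOn g (closedBall x₀ R)) (hg0 : ∀ x ∈ closedBall x₀ R, 0 ≤ g x) :
    ∫ x in ball x₀ R, g x ≤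
      (∫ x in ball x₀ R, g x ^ p) ^ p⁻¹ * volume.real (ball x₀ R) ^ (1 - p⁻¹) := by
  have hp0 : 0 < p := by linarith
  have hfin : IsFiniteMeasure (volume.restrict (ball x₀ R)) :=
    isFiniteMeasure_restrict.2 measure_ball_lt_top.ne
  have hroot : EqOn (fun x => (g x ^ p) ^ p⁻¹) g (ball x₀ R) := fun x hx =>
    rpow_rpow_inv (hg0 x (ball_subset_closedBall hx)) hp0.ne'
  have hholder := integral_rpow_le_of_le_one (μ := volume.restrict (ball x₀ R))
    (inv_nonneg.2 hp0.le) (inv_le_one_of_one_le₀ hp)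
    (ae_restrict_of_forall_mem measurableSet_ball fun x hx =>
      rpow_nonneg (hg0 x (ball_subset_closedBall hx)) p)
    (integrableOn_ball_of_continuousOn (hg.rpow_const fun _ _ => .inr hp0.le))
    ((integrableOn_ball_of_continuousOn hg).congr_fun hroot.symm measurableSet_ball)
  rwa [setIntegral_congr_fun measurableSet_ball hroot, measureReal_restrict_apply_univ] at hholder

theorem rpow_mul_rpow_setIntegral_ball_le (hm1 : m ≤ 1) (hp : 1 ≤ p) (hR : 0 < R)
    (hg : ContinuousOn g (closedBall x₀ R)) (hg0 : ∀ x ∈ closedBall x₀ R, 0 ≤ g x) :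
    R ^ (2 - d * (1 - m)) * (∫ x in ball x₀ R, g x) ^ (1 - m) ≤
      volume.real (ball (0 : ℰ d) 1) ^ ((1 - p⁻¹) * (1 - m)) *
        (R ^ (2 - d * ((1 - m) / p)) * (∫ x in ball x₀ R, g x ^ p) ^ ((1 - m) / p)) := by
  have hω := volume_real_ball_one_pos d
  have hJ : 0 ≤ ∫ x in ball x₀ R, g x ^ p :=
    setIntegral_ball_nonneg fun x hx => rpow_nonneg (hg0 x hx) p
  have hholder := setIntegral_ball_le_rpow_mul_volume hp hg hg0
  have hvol := volume_real_ball_rpow x₀ one_pos hR (1 - p⁻¹)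
  simp only [one_mul, one_pow] at hvol
  rw [hvol] at hholder
  set ω := volume.real (ball (0 : ℰ d) 1)
  set J := ∫ x in ball x₀ R, g x ^ p
  have hexp : 2 - d * ((1 - m) / p) = 2 - d * (1 - m) + d * (1 - p⁻¹) * (1 - m) := by ring
  calc R ^ (2 - d * (1 - m)) * (∫ x in ball x₀ R, g x) ^ (1 - m)
      ≤ R ^ (2 - d * (1 - m)) * (J ^ p⁻¹ * (ω ^ (1 - p⁻¹) * R ^ (d * (1 - p⁻¹)))) ^ (1 - m) := by
        have := setIntegral_ball_nonneg hg0
        gcongr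
    _ = _ := by
      rw [mul_rpow (by positivity) (by positivity), mul_rpow (by positivity) (by positivity),
        ← rpow_mul hJ, ← rpow_mul hω.le, ← rpow_mul hR.le, hexp, rpow_add hR, inv_mul_eq_div]
      ring

namespace IsCutoff

theorem integral_mul_nonneg (hη : IsCutoff β K R x₀ η) (hball : closedBall x₀ (2 * R) ⊆ Ω)
    (hg0 : ∀ x ∈ Ω, 0 ≤ g x) : 0 ≤ ∫ x, g x * η x :=
  integral_nonneg (mul_nonneg_of_tsupport_subset hg0 hη.nonneg (hη.tsupport_subset.trans hball))

theorem setIntegral_le_integral_mul (hη : IsCutoff β K R x₀ η) (hΩ : IsOpen Ω)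
    (hball : closedBall x₀ (2 * R) ⊆ Ω) (hg : ContinuousOn g Ω) (hg0 : ∀ x ∈ Ω, 0 ≤ g x) :
    ∫ x in ball x₀ (3 / 2 * R), g x ≤ ∫ x, g x * η x :=
  calc ∫ x in ball x₀ (3 / 2 * R), g x = ∫ x in ball x₀ (3 / 2 * R), g x * η x :=
        setIntegral_congr_fun measurableSet_ball fun x hx => by
          rw [hη.eq_one x (ball_subset_closedBall hx), mul_one]
    _ ≤ ∫ x, g x * η x := setIntegral_le_integral (hη.integrable_mul hΩ hball hg)
      (.of_forall (mul_nonneg_of_tsupport_subset hg0 hη.nonneg (hη.tsupport_subset.trans hball)))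

theorem integral_mul_le_setIntegral (hη : IsCutoff β K R x₀ η) (hΩ : IsOpen Ω)
    (hball : closedBall x₀ (2 * R) ⊆ Ω) (hg : ContinuousOn g Ω) (hg0 : ∀ x ∈ Ω, 0 ≤ g x) :
    ∫ x, g x * η x ≤ ∫ x in ball x₀ (2 * R), g x := by
  rw [← setIntegral_eq_integral_of_forall_compl_eq_zero (s := ball x₀ (2 * R)) fun x hx => by
    rw [hη.eq_zero x hx, mul_zero]]
  exact setIntegral_mono_on (hη.integrable_mul hΩ hball hg).integrableOn
    (integrableOn_ball_of_continuousOn (hg.mono hball)) measurableSet_ball fun x hx =>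
      mul_le_of_le_one_right (hg0 x (hball (ball_subset_closedBall hx))) (hη.le_one x)

end IsCutoff

theorem setIntegral_ball_rpow_pos (hp : 1 ≤ p) (hg : ContinuousOn g (closedBall x₀ R))
    (hg0 : ∀ x ∈ closedBall x₀ R, 0 ≤ g x) (hpos : 0 < ∫ x in ball x₀ R, g x) :
    0 < ∫ x in ball x₀ R, g x ^ p := by
  refine (setIntegral_ball_nonneg fun x hx => rpow_nonneg (hg0 x hx) p).lt_of_ne' fun hzero => ?_
  have hle := setIntegral_ball_le_rpow_mul_volume hp hg hg0
  rw [hzero, zero_rpow (by positivity), zero_mul] at hle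
  exact hle.not_gt hpos

theorem rpow_mul_rpow_setIntegral_ball_le_two_mul (hm1 : m ≤ 1) (hp : 1 ≤ p) (hR : 0 < R)
    (hg : ContinuousOn g (closedBall x₀ (2 * R))) (hg0 : ∀ x ∈ closedBall x₀ (2 * R), 0 ≤ g x) :
    R ^ (2 - d * (1 - m)) * (∫ x in ball x₀ R, g x) ^ (1 - m) ≤
      volume.real (ball (0 : ℰ d) 1) ^ ((1 - p⁻¹) * (1 - m)) *
        (R ^ (2 - d * ((1 - m) / p)) * (∫ x in ball x₀ (2 * R), g x ^ p) ^ ((1 - m) / p)) := by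
  have hsub : closedBall x₀ R ⊆ closedBall x₀ (2 * R) :=
    closedBall_subset_closedBall (by linarith)
  have hmono : ∫ x in ball x₀ R, g x ^ p ≤ ∫ x in ball x₀ (2 * R), g x ^ p :=
    setIntegral_le_setIntegral_ball (hg.rpow_const fun _ _ => Or.inr (by linarith))
      (fun x hx => rpow_nonneg (hg0 x hx) p) (ball_subset_ball (by linarith))
  have hnonneg : 0 ≤ ∫ x in ball x₀ R, g x ^ p :=
    setIntegral_ball_nonneg fun x hx => rpow_nonneg (hg0 x (hsub hx)) p
  refine (rpow_mul_rpow_setIntegral_ball_le hm1 hp hR (hg.mono hsub)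
    fun x hx => hg0 x (hsub hx)).trans ?_
  gcongr

end IntegralsOverBalls

namespace IsFDESolOnIcc

theorem exists_rpow_mul_rpow_setIntegral_le (d : ℕ) (hm0 : 0 < m) (hm1 : m < 1) :
    ∃ K, 0 < K ∧ ∀ {a b R : ℝ} {Ω : Set (ℰ d)} {u : ℝ → ℰ d → ℝ} {x₀ : ℰ d},
      IsFDESolOnIcc m a b Ω u → a < b → (∀ x ∈ Ω, u b x = 0) → 0 < R →
      closedBall x₀ (2 * R) ⊆ Ω →
      R ^ (2 - d * (1 - m)) * (∫ x in ball x₀ R, u a x) ^ (1 - m) ≤ K * (b - a) := by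
  obtain ⟨K, hK, hcut⟩ := exists_isCutoff d hm1
  have hω := volume_real_ball_one_pos d
  have hm : 0 < 1 - m := by linarith
  refine ⟨(1 - m) * K * (2 ^ d * volume.real (ball (0 : ℰ d) 1)) ^ (1 - m), by positivity, ?_⟩
  intro a b R Ω u x₀ hu hab hb hR hball
  obtain ⟨η, hη⟩ := hcut x₀ hR
  have ha : a ∈ Icc a b := left_mem_Icc.2 hab.le
  have hnonneg (x : ℰ d) (hx : x ∈ Ω) : 0 ≤ u a x := hu.nonneg hab ha hx
  have hball' : closedBall x₀ (3 / 2 * R) ⊆ Ω :=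
    (closedBall_subset_closedBall (by linarith)).trans hball
  have hmass : ∫ x in ball x₀ R, u a x ≤ ∫ x, u a x * η x :=
    (setIntegral_le_setIntegral_ball ((hu.continuousOn_slice ha).mono hball')
      (fun x hx => hnonneg x (hball' hx)) (ball_subset_ball (by linarith))).trans
      (hη.setIntegral_le_integral_mul hu.isOpen hball (hu.continuousOn_slice ha) hnonneg)
  have hdecay := hu.rpow_integral_mul_le_of_eq_zero hm0 hm1 hη hR.le hball hab.le hb
  rw [volume_real_ball_rpow x₀ two_pos hR] at hdecay
  have hmass0 : 0 ≤ ∫ x in ball x₀ R, u a x := setIntegral_ball_nonneg fun x hx =>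
    hnonneg x (hball (closedBall_subset_closedBall (by linarith) hx))
  set ω := volume.real (ball (0 : ℰ d) 1)
  calc R ^ (2 - d * (1 - m)) * (∫ x in ball x₀ R, u a x) ^ (1 - m)
      ≤ R ^ (2 - d * (1 - m)) * ((1 - m) *
          (K / R ^ 2 * ((2 ^ d * ω) ^ (1 - m) * R ^ (d * (1 - m)))) * (b - a)) := by
        gcongr
        exact (rpow_le_rpow hmass0 hmass hm.le).trans hdecay
    _ = _ := by
      have : 0 < R ^ (d * (1 - m)) := by positivity
      rw [rpow_sub hR, rpow_two]
      field_simp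

theorem exists_rpow_setIntegral_rpow_le_add (d : ℕ) {p : ℝ} (hm0 : 0 < m) (hm1 : m < 1)
    (hp : 1 ≤ p) :
    ∃ N, 0 < N ∧ ∀ {a b R : ℝ} {Ω : Set (ℰ d)} {u : ℝ → ℰ d → ℝ} {x₀ : ℰ d},
      IsFDESolOnIcc m a b Ω u → a < b → 0 < R → closedBall x₀ (2 * R) ⊆ Ω →
      (∫ x in ball x₀ (3 / 2 * R), u b x ^ p) ^ ((1 - m) / p) ≤
        (∫ x in ball x₀ (2 * R), u a x ^ p) ^ ((1 - m) / p) +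
          N * R ^ (d * ((1 - m) / p) - 2) * (b - a) := by
  have hp0 : 0 < p := by linarith
  have hq : 0 < p + m - 1 := by linarith
  have hα : 0 < (1 - m) / p := div_pos (by linarith) hp0
  obtain ⟨K, hK, hcut⟩ := exists_isCutoff d (β := 1 - (1 - m) / p) (by linarith)
  have hω := volume_real_ball_one_pos d
  set α := (1 - m) / p
  refine ⟨α * (p * m / (p + m - 1) * K * (2 ^ d * volume.real (ball (0 : ℰ d) 1)) ^ α),
    by positivity, ?_⟩
  intro a b R Ω u x₀ hu hab hR hball
  obtain ⟨η, hη⟩ := hcut x₀ hR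
  have hcont {s : ℝ} (hs : s ∈ Icc a b) : ContinuousOn (fun x => u s x ^ p) Ω :=
    (hu.continuousOn_slice hs).rpow_const fun _ _ => .inr hp0.le
  have hnonneg {s : ℝ} (hs : s ∈ Icc a b) (x : ℰ d) (hx : x ∈ Ω) : 0 ≤ u s x ^ p :=
    rpow_nonneg (hu.nonneg hab hs hx) p
  have ha : a ∈ Icc a b := left_mem_Icc.2 hab.le
  have hb : b ∈ Icc a b := right_mem_Icc.2 hab.le
  have hgrowth := hu.rpow_integral_rpow_mul_le hm0 hm1 hp hη hR.le hball hab.le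
  rw [volume_real_ball_rpow x₀ two_pos hR] at hgrowth
  calc (∫ x in ball x₀ (3 / 2 * R), u b x ^ p) ^ α ≤ (∫ x, u b x ^ p * η x) ^ α :=
        rpow_le_rpow (setIntegral_ball_nonneg fun x hx =>
          hnonneg hb x (hball (closedBall_subset_closedBall (by linarith) hx)))
          (hη.setIntegral_le_integral_mul hu.isOpen hball (hcont hb) (hnonneg hb)) hα.le
    _ ≤ _ := hgrowth.trans (add_le_add (rpow_le_rpow (hη.integral_mul_nonneg hball (hnonneg ha))
        (hη.integral_mul_le_setIntegral hu.isOpen hball (hcont ha) (hnonneg ha)) hα.le)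
        (le_of_eq ?_))
  rw [rpow_sub hR, rpow_two]
  ring

theorem exists_setIntegral_rpow_le (d : ℕ) {p : ℝ} (hm0 : 0 < m) (hm1 : m < 1) (hp : 1 ≤ p) :
    ∃ h C, 0 < h ∧ 0 < C ∧ ∀ {a b R : ℝ} {Ω : Set (ℰ d)} {u : ℝ → ℰ d → ℝ} {x₀ : ℰ d},
      IsFDESolOnIcc m a b Ω u → a < b → 0 < R → closedBall x₀ (2 * R) ⊆ Ω →
      b - a ≤ h * (R ^ (2 - d * ((1 - m) / p)) *
        (∫ x in ball x₀ (2 * R), u a x ^ p) ^ ((1 - m) / p)) →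
      ∫ x in ball x₀ (3 / 2 * R), u b x ^ p ≤ C * ∫ x in ball x₀ (2 * R), u a x ^ p := by
  have hα : 0 < (1 - m) / p := div_pos (by linarith) (by linarith)
  obtain ⟨N, hN, hgrowth⟩ := exists_rpow_setIntegral_rpow_le_add d hm0 hm1 hp
  set α := (1 - m) / p
  refine ⟨N⁻¹, 2 ^ α⁻¹, by positivity, by positivity, ?_⟩
  intro a b R Ω u x₀ hu hab hR hball htime
  have hnonneg {s : ℝ} (hs : s ∈ Icc a b) (x : ℰ d) (hx : x ∈ closedBall x₀ (2 * R)) :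
      0 ≤ u s x ^ p := rpow_nonneg (hu.nonneg hab hs (hball hx)) p
  have hJ : 0 ≤ ∫ x in ball x₀ (2 * R), u a x ^ p :=
    setIntegral_ball_nonneg (hnonneg (left_mem_Icc.2 hab.le))
  have hJb : 0 ≤ ∫ x in ball x₀ (3 / 2 * R), u b x ^ p := setIntegral_ball_nonneg fun x hx =>
    hnonneg (right_mem_Icc.2 hab.le) x (closedBall_subset_closedBall (by linarith) hx)
  rw [← rpow_le_rpow_iff hJb (by positivity) hα, mul_rpow (by positivity) hJ,
    rpow_inv_rpow zero_le_two hα.ne']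
  set J := ∫ x in ball x₀ (2 * R), u a x ^ p
  calc (∫ x in ball x₀ (3 / 2 * R), u b x ^ p) ^ α ≤ J ^ α + N * R ^ (d * α - 2) * (b - a) :=
        hgrowth hu hab hR hball
    _ ≤ J ^ α + N * R ^ (d * α - 2) * (N⁻¹ * (R ^ (2 - d * α) * J ^ α)) := by gcongr
    _ = J ^ α + N * N⁻¹ * (R ^ (d * α - 2) * R ^ (2 - d * α)) * J ^ α := by ring
    _ = 2 * J ^ α := by
      rw [← rpow_add hR, mul_inv_cancel₀ hN.ne', sub_add_sub_cancel, sub_self, rpow_zero]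
      ring

end IsFDESolOnIcc

section PointwiseBound

theorem volume_le_of_forall_volume_slice_le {a b : ℝ} {c : ENNReal} {S : Set (ℝ × ℰ d)}
    (hS : MeasurableSet S) (hab : ∀ q ∈ S, q.1 ∈ Icc a b)
    (hslice : ∀ s ∈ Icc a b, volume (Prod.mk s ⁻¹' S) ≤ c) :
    volume S ≤ ENNReal.ofReal (b - a) * c := by
  rw [Measure.volume_eq_prod, Measure.prod_apply hS]
  calc ∫⁻ s, volume (Prod.mk s ⁻¹' S) ≤ ∫⁻ s, (Icc a b).indicator (fun _ => c) s := by
        refine lintegral_mono fun s => ?_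
        by_cases hs : s ∈ Icc a b
        · simpa only [indicator_of_mem hs] using hslice s hs
        · have hempty : Prod.mk s ⁻¹' S = ∅ :=
            eq_empty_of_forall_notMem fun x hx => hs (hab _ hx)
          simp only [hempty, measure_empty, zero_le]
    _ = ENNReal.ofReal (b - a) * c := by
        rw [lintegral_indicator measurableSet_Icc, setLIntegral_const, Real.volume_Icc, mul_comm]

theorem volume_inter_superlevel_le {B : Set (ℰ d)} {g : ℰ d → ℝ} {p κ J : ℝ} (hB : IsCompact B)
    (hg : ContinuousOn g B) (hg0 : ∀ x ∈ B, 0 ≤ g x) (hp : 0 ≤ p) (hκ : 0 < κ)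
    (hJ : ∫ x in B, g x ^ p ≤ J) : volume (B ∩ {x | κ ≤ g x}) ≤ ENNReal.ofReal (J / κ ^ p) := by
  have hgp0 : ∀ x ∈ B, 0 ≤ g x ^ p := fun x hx => rpow_nonneg (hg0 x hx) p
  have hchebyshev := (mul_meas_ge_le_integral_of_nonneg
    (ae_restrict_of_forall_mem hB.measurableSet hgp0)
    ((hg.rpow_const fun _ _ => Or.inr hp).integrableOn_compact hB) (κ ^ p)).trans hJ
  have hsub : B ∩ {x | κ ≤ g x} ⊆ {x | κ ^ p ≤ g x ^ p} ∩ B :=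
    fun x hx => ⟨rpow_le_rpow hκ.le hx.2 hp, hx.1⟩
  have hfin : volume.restrict B {x | κ ^ p ≤ g x ^ p} ≠ ⊤ := by
    rw [Measure.restrict_apply' hB.measurableSet]
    exact measure_ne_top_of_subset inter_subset_right hB.measure_lt_top.ne
  calc volume (B ∩ {x | κ ≤ g x}) ≤ volume.restrict B {x | κ ^ p ≤ g x ^ p} := by
        rw [Measure.restrict_apply' hB.measurableSet]
        exact measure_mono hsub
    _ ≤ ENNReal.ofReal (J / κ ^ p) := by
        rw [← ENNReal.ofReal_toReal hfin]
        refine ENNReal.ofReal_le_ofReal ((le_div_iff₀ (rpow_pos_of_pos hκ p)).2 ?_)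
        rwa [mul_comm]

theorem volume_backwardCylinder_inter_superlevel_le {t τ r p κ J : ℝ} {x : ℰ d} (hτ : 0 ≤ τ)
    (hu : ContinuousOn (fun q : ℝ × ℰ d => u q.1 q.2) (backwardCylinder t τ x r))
    (hu0 : ∀ q ∈ backwardCylinder t τ x r, 0 ≤ u q.1 q.2) (hp : 0 ≤ p) (hκ : 0 < κ)
    (hJ : ∀ s ∈ Icc (t - τ) t, ∫ y in closedBall x r, u s y ^ p ≤ J) :
    volume (backwardCylinder t τ x r ∩ {q | κ ≤ u q.1 q.2}) ≤
      ENNReal.ofReal (τ * (J / κ ^ p)) := by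
  have hclosed : IsClosed (backwardCylinder t τ x r ∩ {q | κ ≤ u q.1 q.2}) :=
    hu.preimage_isClosed_of_isClosed (isClosed_Icc.prod isClosed_closedBall) isClosed_Ici
  rw [ENNReal.ofReal_mul hτ]
  have hvol := volume_le_of_forall_volume_slice_le hclosed.measurableSet (fun q hq => hq.1.1)
    fun s hs => (measure_mono (t := closedBall x r ∩ {y | κ ≤ u s y}) fun y hy =>
      ⟨hy.1.2, hy.2⟩).trans
      (volume_inter_superlevel_le (isCompact_closedBall x r)
        (hu.comp (f := fun y => (s, y)) (by fun_prop) fun y hy => ⟨hs, hy⟩)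
        (fun y hy => hu0 (s, y) ⟨hs, hy⟩) hp hκ (hJ s hs))
  rwa [sub_sub_cancel] at hvol

/-- The radius `r` with `r ^ d = K ^ d * J * M ^ (-p)`. By Chebyshev's inequality, a superlevel set
`{M ≤ g}` with `‖g‖ₚᵖ ≤ J` fills only a fixed fraction of a ball of this radius. -/
noncomputable def growthRadius (d : ℕ) (p K J M : ℝ) : ℝ :=
  K * (J * M ^ (-p)) ^ (d : ℝ)⁻¹

theorem growthRadius_pos {p K J M : ℝ} (hK : 0 < K) (hJ : 0 < J) (hM : 0 < M) :
    0 < growthRadius d p K J M := by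
  unfold growthRadius
  positivity

theorem growthRadius_pow {p K J M : ℝ} (hd : d ≠ 0) (hJ : 0 ≤ J) (hM : 0 ≤ M) :
    growthRadius d p K J M ^ d = K ^ d * (J * M ^ (-p)) := by
  rw [growthRadius, mul_pow, rpow_inv_natCast_pow (by positivity) hd]

theorem IsFDESol.exists_growth (hd : d ≠ 0) (hm0 : 0 < m) (hm1 : m < 1) {p : ℝ} (hp : 0 ≤ p) :
    ∃ K, 0 < K ∧ ∀ {Q : Set (ℝ × ℰ d)} {u : ℝ → ℰ d → ℝ} {t r J : ℝ} {x : ℰ d},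
      IsOpen Q → IsFDESol m Q u → 0 < J → 0 < u t x → r = growthRadius d p K J (u t x) →
      backwardCylinder t (u t x ^ (1 - m) * r ^ 2) x r ⊆ Q →
      (∀ s ∈ Icc (t - u t x ^ (1 - m) * r ^ 2) t, ∫ y in closedBall x r, u s y ^ p ≤ J) →
      ∃ q ∈ backwardCylinder t (u t x ^ (1 - m) * r ^ 2) x r,
        (3 / 2) ^ m⁻¹ * u t x < u q.1 q.2 := by
  obtain ⟨c, hc, hlower⟩ := IsFDESol.exists_volume_superlevel_ge d hm0 hm1
  set κ : ℝ := (1 / 2) ^ m⁻¹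
  have hκ : 0 < κ := by positivity
  refine ⟨(2 * κ ^ (-p) / c) ^ (d : ℝ)⁻¹, by positivity, ?_⟩
  intro Q u t r J x hQ hu hJ hM hr hsub hmass
  by_contra! hbound
  have hr0 : 0 < r := hr ▸ growthRadius_pos (by positivity) hJ hM
  have hrd : r ^ d = 2 * κ ^ (-p) / c * (J * u t x ^ (-p)) := by
    rw [hr, growthRadius_pow hd hJ.le hM.le, rpow_inv_natCast_pow (by positivity) hd]
  set τ := u t x ^ (1 - m) * r ^ 2 with hτ
  have hτ0 : 0 < τ := by positivity
  have hvol := (hlower hQ hu hM hr0 hτ rfl hsub hbound).trans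
    (volume_backwardCylinder_inter_superlevel_le hτ0.le (hu.2.1.continuousOn.mono hsub)
      (fun q hq => (hu.1 q (hsub hq)).le) hp (mul_pos hκ hM) hmass)
  rw [ENNReal.ofReal_le_ofReal_iff (by positivity), mul_rpow hκ.le hM.le] at hvol
  have hdouble : c * (τ * r ^ d) = 2 * (τ * (J / (κ ^ p * u t x ^ p))) := by
    rw [hrd, rpow_neg hκ.le, rpow_neg hM.le]
    field_simp
  have : 0 < τ * (J / (κ ^ p * u t x ^ p)) := by positivity
  linarith

theorem mul_sum_range_rpow_neg_pow_le {L α r₀ ρ : ℝ} (hL : 1 < L) (hα : 0 < α) (hr₀ : 0 ≤ r₀)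
    (hρ : r₀ * (1 - L ^ (-α))⁻¹ ≤ ρ) (k : ℕ) :
    r₀ * ∑ i ∈ Finset.range k, (L ^ (-α)) ^ i ≤ ρ := by
  have hpos : 0 ≤ L ^ (-α) := rpow_nonneg (by linarith) _
  have hlt : L ^ (-α) < 1 := rpow_lt_one_of_one_lt_of_neg hL (neg_lt_zero.2 hα)
  refine (mul_le_mul_of_nonneg_left ?_ hr₀).trans hρ
  rw [← tsum_geometric_of_lt_one hpos hlt]
  exact (summable_geometric_of_lt_one hpos hlt).sum_le_tsum _ fun i _ => pow_nonneg hpos i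

theorem div_rpow_neg_le_pow {L M M₀ e : ℝ} {k : ℕ} (hL : 0 < L) (hM₀ : 0 < M₀) (he : 0 ≤ e)
    (h : L ^ k * M₀ ≤ M) : (M / M₀) ^ (-e) ≤ (L ^ (-e)) ^ k := by
  rw [rpow_pow_comm hL.le]
  exact rpow_le_rpow_of_nonpos (pow_pos hL k) ((le_div_iff₀ hM₀).2 h) (neg_nonpos.2 he)

section Doubling

theorem backwardCylinder_subset {E : Type*} [PseudoMetricSpace E] {s t τ θ r R : ℝ} {x y : E}
    (hτ : t - θ ≤ s - τ) (hst : s ≤ t) (hr : r + dist y x ≤ R) :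
    backwardCylinder s τ y r ⊆ backwardCylinder t θ x R :=
  prod_mono (Icc_subset_Icc hτ hst) (closedBall_subset_closedBall' hr)

theorem mul_div_rpow_neg_le {L α r₀ M M₀ : ℝ} (hL : 1 < L) (hα : 0 < α) (hr₀ : 0 ≤ r₀)
    (hM₀ : 0 < M₀) (hM : M₀ ≤ M) : r₀ * (M / M₀) ^ (-α) ≤ r₀ * (1 - L ^ (-α))⁻¹ := by
  have hpos : 0 < L ^ (-α) := rpow_pos_of_pos (by linarith) _
  have hlt : L ^ (-α) < 1 := rpow_lt_one_of_one_lt_of_neg hL (neg_lt_zero.2 hα)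
  refine mul_le_mul_of_nonneg_left ?_ hr₀
  exact (rpow_le_one_of_one_le_of_nonpos ((one_le_div hM₀).2 hM) (neg_nonpos.2 hα.le)).trans
    ((one_le_inv₀ (by linarith)).2 (by linarith))

variable {E : Type*} [PseudoMetricSpace E] {v : ℝ → E → ℝ} {L α β r₀ τ₀ M₀ S ρ t : ℝ} {x : E}

theorem exists_growth_chain (hL : 1 ≤ L) (hα : 0 ≤ α) (hβ : 0 ≤ β) (hr₀ : 0 ≤ r₀) (hτ₀ : 0 ≤ τ₀)
    (hM₀ : 0 < M₀) (hρ : ∀ k, r₀ * ∑ i ∈ Finset.range k, (L ^ (-α)) ^ i ≤ ρ)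
    (hS : ∀ k, τ₀ * ∑ i ∈ Finset.range k, (L ^ (-β)) ^ i ≤ S)
    (hgrowth : ∀ s ∈ Icc (t - S) t, ∀ y ∈ closedBall x ρ, M₀ ≤ v s y →
      ∃ q ∈ backwardCylinder s (τ₀ * (v s y / M₀) ^ (-β)) y (r₀ * (v s y / M₀) ^ (-α)),
        L * v s y < v q.1 q.2) (hM : M₀ ≤ v t x) (k : ℕ) :
    ∃ s y, t - τ₀ * ∑ i ∈ Finset.range k, (L ^ (-β)) ^ i ≤ s ∧ s ≤ t ∧
      dist y x ≤ r₀ * ∑ i ∈ Finset.range k, (L ^ (-α)) ^ i ∧ L ^ k * M₀ ≤ v s y := by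
  have hL0 : 0 < L := by linarith
  induction k with
  | zero => exact ⟨t, x, by simp, le_rfl, by simp, by simpa using hM⟩
  | succ k ih =>
    obtain ⟨s, y, hs, hst, hy, hk⟩ := ih
    have hMk : M₀ ≤ v s y := (le_mul_of_one_le_left hM₀.le (one_le_pow₀ hL)).trans hk
    obtain ⟨⟨s', y'⟩, ⟨hs', hy'⟩, hgrow⟩ :=
      hgrowth s ⟨by linarith [hS k], hst⟩ y (hy.trans (hρ k)) hMk
    have hτ := mul_le_mul_of_nonneg_left (div_rpow_neg_le_pow hL0 hM₀ hβ hk) hτ₀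
    have hr := mul_le_mul_of_nonneg_left (div_rpow_neg_le_pow hL0 hM₀ hα hk) hr₀
    simp only [Finset.sum_range_succ, mul_add]
    refine ⟨s', y', by linarith [hs'.1], hs'.2.trans hst, ?_, ?_⟩
    · linarith [dist_triangle y' y x, mem_closedBall.1 hy']
    · rw [pow_succ', mul_assoc]
      exact (mul_le_mul_of_nonneg_left hk hL0.le).trans hgrow.le

theorem lt_of_forall_exists_growth {B : ℝ} (hL : 1 < L) (hα : 0 < α) (hβ : 0 < β) (hr₀ : 0 ≤ r₀)
    (hτ₀ : 0 ≤ τ₀) (hM₀ : 0 < M₀) (hρ : r₀ * (1 - L ^ (-α))⁻¹ ≤ ρ) (hS : τ₀ * (1 - L ^ (-β))⁻¹ ≤ S)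
    (hB : ∀ s ∈ Icc (t - S) t, ∀ y ∈ closedBall x ρ, v s y ≤ B)
    (hgrowth : ∀ s ∈ Icc (t - S) t, ∀ y ∈ closedBall x ρ, M₀ ≤ v s y →
      ∃ q ∈ backwardCylinder s (τ₀ * (v s y / M₀) ^ (-β)) y (r₀ * (v s y / M₀) ^ (-α)),
        L * v s y < v q.1 q.2) : v t x < M₀ := by
  by_contra! hM
  have hsumρ := mul_sum_range_rpow_neg_pow_le hL hα hr₀ hρ
  have hsumS := mul_sum_range_rpow_neg_pow_le hL hβ hτ₀ hS
  obtain ⟨k, hk⟩ := pow_unbounded_of_one_lt (B / M₀) hL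
  obtain ⟨s, y, hs, hst, hy, hks⟩ :=
    exists_growth_chain hL.le hα.le hβ.le hr₀ hτ₀ hM₀ hsumρ hsumS hgrowth hM k
  have hle := hB s ⟨by linarith [hsumS k], hst⟩ y (hy.trans (hsumρ k))
  linarith [(div_lt_iff₀ hM₀).1 hk]

end Doubling

end PointwiseBound

section Scaling

variable {p K J M M₀ A θ R D : ℝ}

theorem growthRadius_mul_div_rpow (hJ : 0 ≤ J) (hM₀ : 0 < M₀) (hM : 0 ≤ M) :
    growthRadius d p K J M₀ * (M / M₀) ^ (-(p / d)) = growthRadius d p K J M := by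
  have hsplit : M ^ (-p) = M₀ ^ (-p) * (M / M₀) ^ (-p) := by
    rw [← mul_rpow hM₀.le (by positivity), mul_div_cancel₀ _ hM₀.ne']
  rw [growthRadius, growthRadius, hsplit, ← mul_assoc J,
    mul_rpow (x := J * M₀ ^ (-p)) (by positivity) (by positivity), ← rpow_mul (by positivity),
    div_eq_mul_inv p, neg_mul, mul_assoc]

theorem rpow_mul_growthRadius_sq_mul_div_rpow (hd : d ≠ 0) (hJ : 0 ≤ J) (hM₀ : 0 < M₀)
    (hM : 0 < M) :
    M₀ ^ (1 - m) * growthRadius d p K J M₀ ^ 2 * (M / M₀) ^ (-((2 * p - d * (1 - m)) / d)) =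
      M ^ (1 - m) * growthRadius d p K J M ^ 2 := by
  have hd0 : (d : ℝ) ≠ 0 := Nat.cast_ne_zero.2 hd
  have hquot : 0 < M / M₀ := div_pos hM hM₀
  have hexp : -((2 * p - d * (1 - m)) / d) = (1 - m) + (-(p / d) + -(p / d)) := by
    field_simp
    ring
  rw [← growthRadius_mul_div_rpow hJ hM₀ hM.le, hexp, rpow_add hquot, rpow_add hquot]
  nth_rewrite 4 [← mul_div_cancel₀ M hM₀.ne']
  rw [mul_rpow hM₀.le hquot.le]
  ring

theorem growthRadius_level (hd : d ≠ 0) (hD0 : D ≠ 0) (hD : D = 2 * p - d * (1 - m)) (hA : 0 < A)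
    (hθ : 0 < θ) (hJ : 0 < J) :
    growthRadius d p K J (A * θ ^ (-(d / D)) * J ^ (2 / D)) =
      K * A ^ (-(p / d)) * (θ ^ (p / D) * J ^ (-((1 - m) / D))) := by
  have hd0 : (d : ℝ) ≠ 0 := Nat.cast_ne_zero.2 hd
  have hm : 1 - m = (2 * p - D) / d := by rw [hD]; field_simp; ring
  obtain ⟨a, rfl⟩ : ∃ a, exp a = A := ⟨log A, exp_log hA⟩
  obtain ⟨b, rfl⟩ : ∃ b, exp b = θ := ⟨log θ, exp_log hθ⟩
  obtain ⟨c, rfl⟩ : ∃ c, exp c = J := ⟨log J, exp_log hJ⟩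
  rw [growthRadius, hm, mul_assoc K]
  simp only [← exp_mul, ← exp_add]
  congr 2
  field_simp
  ring

theorem rpow_mul_growthRadius_sq_level (hd : d ≠ 0) (hD0 : D ≠ 0) (hD : D = 2 * p - d * (1 - m))
    (hA : 0 < A) (hθ : 0 < θ) (hJ : 0 < J) :
    (A * θ ^ (-(d / D)) * J ^ (2 / D)) ^ (1 - m) *
        growthRadius d p K J (A * θ ^ (-(d / D)) * J ^ (2 / D)) ^ 2 =
      K ^ 2 * A ^ (-(D / d)) * θ := by
  have hd0 : (d : ℝ) ≠ 0 := Nat.cast_ne_zero.2 hd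
  have hm : 1 - m = (2 * p - D) / d := by rw [hD]; field_simp; ring
  rw [growthRadius_level hd hD0 hD hA hθ hJ, hm, mul_assoc K, mul_pow, mul_left_comm,
    mul_assoc (K ^ 2)]
  obtain ⟨a, rfl⟩ : ∃ a, exp a = A := ⟨log A, exp_log hA⟩
  obtain ⟨b, rfl⟩ : ∃ b, exp b = θ := ⟨log θ, exp_log hθ⟩
  obtain ⟨c, rfl⟩ : ∃ c, exp c = J := ⟨log J, exp_log hJ⟩
  simp only [sq, ← exp_mul, ← exp_add]
  congr 2
  field_simp
  ring

theorem rpow_mul_rpow_le_radius (hp : 0 < p) (hD0 : 0 < D) (hD : D = 2 * p - d * (1 - m))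
    (hθ : 0 < θ) (hJ : 0 < J) (hR : 0 < R)
    (hθR : θ ≤ R ^ (2 - d * ((1 - m) / p)) * J ^ ((1 - m) / p)) :
    θ ^ (p / D) * J ^ (-((1 - m) / D)) ≤ R := by
  have hR1 : (2 - d * ((1 - m) / p)) * (p / D) = 1 := by
    field_simp
    linarith
  have hJ0 : (1 - m) / p * (p / D) = (1 - m) / D := by field_simp
  calc θ ^ (p / D) * J ^ (-((1 - m) / D))
      ≤ (R ^ (2 - d * ((1 - m) / p)) * J ^ ((1 - m) / p)) ^ (p / D) * J ^ (-((1 - m) / D)) := by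
        gcongr
    _ = R := by
        rw [mul_rpow (by positivity) (by positivity), ← rpow_mul hR.le, ← rpow_mul hJ.le, hR1, hJ0,
          rpow_one, mul_assoc, ← rpow_add hJ, add_neg_cancel, rpow_zero, mul_one]

theorem exists_mul_rpow_neg_le {e₁ e₂ b₁ b₂ : ℝ} (K₁ K₂ : ℝ) (he₁ : 0 < e₁) (he₂ : 0 < e₂)
    (hb₁ : 0 < b₁) (hb₂ : 0 < b₂) :
    ∃ A : ℝ, 0 < A ∧ K₁ * A ^ (-e₁) ≤ b₁ ∧ K₂ * A ^ (-e₂) ≤ b₂ := by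
  have hlim : ∀ {e b : ℝ} (K : ℝ), 0 < e → 0 < b → ∀ᶠ A : ℝ in atTop, K * A ^ (-e) ≤ b :=
    fun {e b} K he hb => Tendsto.eventually_le_const hb
      (by simpa only [mul_zero] using (tendsto_rpow_neg_atTop he).const_mul K)
  exact ((eventually_gt_atTop 0).and ((hlim K₁ he₁ hb₁).and (hlim K₂ he₂ hb₂))).exists

end Scaling

section Smoothing

theorem IsFDESol.setIntegral_rpow_le_setIntegral_ball (hu : IsFDESol m Q u) {s p R : ℝ} {x : ℰ d}
    {S : Set (ℰ d)} (hp : 0 ≤ p) (hQ : ∀ y ∈ closedBall x R, (s, y) ∈ Q) (hS : S ⊆ ball x R) :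
    ∫ y in S, u s y ^ p ≤ ∫ y in ball x R, u s y ^ p :=
  setIntegral_le_setIntegral_ball
    ((hu.2.1.continuousOn.comp (f := fun y => (s, y)) (by fun_prop) hQ).rpow_const
      fun _ _ => Or.inr hp)
    (fun y hy => (rpow_pos_of_pos (hu.1 _ (hQ y hy)) p).le) hS

theorem IsFDESol.exists_lt_of_growthRadius_le (hd : d ≠ 0) (hm0 : 0 < m) (hm1 : m < 1) {p : ℝ}
    (hp : 0 < p) (hD : 0 < 2 * p - d * (1 - m)) :
    ∃ K, 0 < K ∧ ∀ {Q : Set (ℝ × ℰ d)} {u : ℝ → ℰ d → ℝ} {t θ R J M₀ : ℝ} {x : ℰ d},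
      IsOpen Q → IsFDESol m Q u → 0 < R → 0 < θ → 0 < J → 0 < M₀ → backwardCylinder t θ x R ⊆ Q →
      (∀ s ∈ Icc (t - θ) t, ∫ y in ball x R, u s y ^ p ≤ J) →
      growthRadius d p K J M₀ * (1 - ((3 / 2) ^ m⁻¹) ^ (-(p / d)))⁻¹ ≤ R / 3 →
      M₀ ^ (1 - m) * growthRadius d p K J M₀ ^ 2 *
        (1 - ((3 / 2) ^ m⁻¹) ^ (-((2 * p - d * (1 - m)) / d)))⁻¹ ≤ θ / 3 →
      u t x < M₀ := by
  obtain ⟨K, hK, hgrowth⟩ := IsFDESol.exists_growth hd hm0 hm1 hp.le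
  refine ⟨K, hK, ?_⟩
  intro Q u t θ R J M₀ x hQ hu hR hθ hJ hM₀ hsub hmass hr hτ
  have hL : (1 : ℝ) < (3 / 2) ^ m⁻¹ := one_lt_rpow (by norm_num) (by positivity)
  have hr₀ := growthRadius_pos (d := d) (p := p) hK hJ hM₀
  have hτ₀ : 0 < M₀ ^ (1 - m) * growthRadius d p K J M₀ ^ 2 := by positivity
  have hα : 0 < p / d := by positivity
  have hβ : 0 < (2 * p - d * (1 - m)) / d := by positivity
  obtain ⟨B, hB⟩ := (isCompact_Icc.prod (isCompact_closedBall x R)).bddAbove_image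
    (hu.2.1.continuousOn.mono hsub)
  have hcyl : backwardCylinder t (θ / 3) x (R / 3) ⊆ backwardCylinder t θ x R :=
    backwardCylinder_subset (by linarith) le_rfl (by rw [dist_self]; linarith)
  refine lt_of_forall_exists_growth hL hα hβ hr₀.le hτ₀.le hM₀ hr hτ
    (fun s hs y hy => hB ⟨(s, y), hcyl ⟨hs, hy⟩, rfl⟩) fun s hs y hy hMs => ?_
  have hM : 0 < u s y := hM₀.trans_le hMs
  have hrs := (mul_div_rpow_neg_le hL hα hr₀.le hM₀ hMs).trans hr
  have hτs := (mul_div_rpow_neg_le hL hβ hτ₀.le hM₀ hMs).trans hτ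
  rw [growthRadius_mul_div_rpow hJ.le hM₀ hM.le] at hrs ⊢
  rw [rpow_mul_growthRadius_sq_mul_div_rpow hd hJ.le hM₀ hM] at hτs ⊢
  rw [mem_closedBall] at hy
  have hslice : ∀ σ ∈ Icc (s - u s y ^ (1 - m) * growthRadius d p K J (u s y) ^ 2) s,
      σ ∈ Icc (t - θ) t := fun σ hσ => ⟨by linarith [hσ.1, hs.1], hσ.2.trans hs.2⟩
  refine hgrowth hQ hu hJ hM rfl
    ((backwardCylinder_subset (by linarith [hs.1]) hs.2 (by linarith)).trans hsub) fun σ hσ => ?_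
  exact (hu.setIntegral_rpow_le_setIntegral_ball hp.le (fun z hz => hsub ⟨hslice σ hσ, hz⟩)
    (closedBall_subset_ball' (by linarith))).trans (hmass σ (hslice σ hσ))

theorem IsFDESol.exists_le_rpow_mul_rpow (hd : d ≠ 0) (hm0 : 0 < m) (hm1 : m < 1) {p : ℝ}
    (hp : 0 < p) (hD : 0 < 2 * p - d * (1 - m)) :
    ∃ A, 0 < A ∧ ∀ {Q : Set (ℝ × ℰ d)} {u : ℝ → ℰ d → ℝ} {t θ R J : ℝ} {x : ℰ d},
      IsOpen Q → IsFDESol m Q u → 0 < R → 0 < θ → 0 < J → backwardCylinder t θ x R ⊆ Q →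
      (∀ s ∈ Icc (t - θ) t, ∫ y in ball x R, u s y ^ p ≤ J) →
      θ ≤ R ^ (2 - d * ((1 - m) / p)) * J ^ ((1 - m) / p) →
      u t x ≤ A * θ ^ (-(d / (2 * p - d * (1 - m)))) * J ^ (2 / (2 * p - d * (1 - m))) := by
  obtain ⟨K, -, hlt⟩ := IsFDESol.exists_lt_of_growthRadius_le hd hm0 hm1 hp hD
  obtain ⟨D, hD_eq⟩ : ∃ D, D = 2 * p - d * (1 - m) := ⟨_, rfl⟩
  rw [← hD_eq] at hD hlt ⊢
  have hL : (1 : ℝ) < (3 / 2) ^ m⁻¹ := one_lt_rpow (by norm_num) (by positivity)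
  set L : ℝ := (3 / 2) ^ m⁻¹
  have hα : 0 < p / d := by positivity
  have hβ : 0 < D / d := by positivity
  have hLpos : ∀ {e : ℝ}, 0 < e → 0 < 1 - L ^ (-e) := fun he =>
    sub_pos.2 (rpow_lt_one_of_one_lt_of_neg hL (neg_lt_zero.2 he))
  obtain ⟨A, hA, hAr, hAτ⟩ := exists_mul_rpow_neg_le K (K ^ 2) hα hβ
    (b₁ := (1 - L ^ (-(p / d))) / 3) (b₂ := (1 - L ^ (-(D / d))) / 3)
    (div_pos (hLpos hα) three_pos) (div_pos (hLpos hβ) three_pos)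
  refine ⟨A, hA, ?_⟩
  intro Q u t θ R J x hQ hu hR hθ hJ hsub hmass hθR
  refine (hlt hQ hu hR hθ hJ (by positivity) hsub hmass ?_ ?_).le
  · rw [growthRadius_level hd hD.ne' hD_eq hA hθ hJ, mul_inv_le_iff₀ (hLpos hα)]
    calc K * A ^ (-(p / d)) * (θ ^ (p / D) * J ^ (-((1 - m) / D)))
        ≤ (1 - L ^ (-(p / d))) / 3 * R := by
          gcongr
          · linarith [hLpos hα]
          · exact rpow_mul_rpow_le_radius hp hD hD_eq hθ hJ hR hθR
      _ = R / 3 * (1 - L ^ (-(p / d))) := by ring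
  · rw [rpow_mul_growthRadius_sq_level hd hD.ne' hD_eq hA hθ hJ, mul_inv_le_iff₀ (hLpos hβ)]
    linarith [mul_le_mul_of_nonneg_right hAτ hθ.le]

theorem IsFDESolOnIcc.exists_le_rpow_mul_rpow (hd : d ≠ 0) (hm0 : 0 < m) (hm1 : m < 1) {p : ℝ}
    (hp : 1 ≤ p) (hD : 0 < 2 * p - d * (1 - m)) :
    ∃ h A, 0 < h ∧ 0 < A ∧ ∀ {a b t R : ℝ} {Ω : Set (ℰ d)} {u : ℝ → ℰ d → ℝ} {x₀ x : ℰ d},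
      IsFDESolOnIcc m a b Ω u → t ∈ Ioo a b → 0 < R → closedBall x₀ (2 * R) ⊆ Ω →
      0 < ∫ y in ball x₀ (2 * R), u a y ^ p →
      t - a ≤ h * (R ^ (2 - d * ((1 - m) / p)) *
        (∫ y in ball x₀ (2 * R), u a y ^ p) ^ ((1 - m) / p)) →
      x ∈ ball x₀ R →
      u t x ≤ A * (t - a) ^ (-(d / (2 * p - d * (1 - m)))) *
        (∫ y in ball x₀ (2 * R), u a y ^ p) ^ (2 / (2 * p - d * (1 - m))) := by
  obtain ⟨h, C, hh, hC, hstable⟩ := IsFDESolOnIcc.exists_setIntegral_rpow_le d hm0 hm1 hp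
  obtain ⟨A, hA, hsmooth⟩ := IsFDESol.exists_le_rpow_mul_rpow hd hm0 hm1 (by linarith) hD
  set D := 2 * p - d * (1 - m)
  refine ⟨min h (2 * ((1 / 2) ^ (2 - d * ((1 - m) / p)) * C ^ ((1 - m) / p))),
    A * (1 / 2) ^ (-(d / D)) * C ^ (2 / D), by positivity, by positivity, ?_⟩
  intro a b t R Ω u x₀ x hu ht hR hball hJ htime hx
  set J := ∫ y in ball x₀ (2 * R), u a y ^ p
  have hθ : 0 < t - a := sub_pos.2 ht.1
  rw [mem_ball] at hx
  have hslice : Icc (t - 1 / 2 * (t - a)) t ⊆ Ioc a t := fun s hs => ⟨by linarith [hs.1], hs.2⟩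
  have hslice' : Ioc a t ⊆ Ioo a b := fun s hs => ⟨hs.1, hs.2.trans_lt ht.2⟩
  have hmass : ∀ s ∈ Ioc a t, ∫ y in ball x (1 / 2 * R), u s y ^ p ≤ C * J := fun s hs =>
    calc ∫ y in ball x (1 / 2 * R), u s y ^ p ≤ ∫ y in ball x₀ (3 / 2 * R), u s y ^ p :=
          hu.isFDESol.setIntegral_rpow_le_setIntegral_ball (by linarith)
            (fun y hy => ⟨hslice' hs, hball (closedBall_subset_closedBall (by linarith) hy)⟩)
            (ball_subset_ball' (by linarith))
      _ ≤ C * J := hstable (hu.mono le_rfl (hslice' hs).2.le) hs.1 hR hball <|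
          (sub_le_sub_right hs.2 a).trans <| htime.trans <|
            mul_le_mul_of_nonneg_right (min_le_left _ _) (by positivity)
  have htime' : 1 / 2 * (t - a) ≤
      (1 / 2 * R) ^ (2 - d * ((1 - m) / p)) * (C * J) ^ ((1 - m) / p) := by
    rw [mul_rpow one_half_pos.le hR.le, mul_rpow hC.le hJ.le, mul_mul_mul_comm]
    have := htime.trans (mul_le_mul_of_nonneg_right (min_le_right _ _) (by positivity))
    linarith
  have hcyl : backwardCylinder t (1 / 2 * (t - a)) x (1 / 2 * R) ⊆ Ioo a b ×ˢ Ω :=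
    prod_mono (hslice.trans hslice')
      ((closedBall_subset_closedBall' (by linarith)).trans hball)
  refine (hsmooth (isOpen_Ioo.prod hu.isOpen) hu.isFDESol (by positivity) (by positivity)
    (mul_pos hC hJ) hcyl (fun s hs => hmass s (hslice hs)) htime').trans_eq ?_
  rw [mul_rpow one_half_pos.le hθ.le, mul_rpow hC.le hJ.le]
  ring

end Smoothing

section Harnack

theorem continuousOn_Icc_prod_of_Ico_of_Ioc {X Y : Type*} [TopologicalSpace X] [TopologicalSpace Y]
    {a b : ℝ} {s : Set X} {f : ℝ × X → Y} (hab : a < b) (hleft : ContinuousOn f (Ico a b ×ˢ s))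
    (hright : ContinuousOn f (Ioc a b ×ˢ s)) : ContinuousOn f (Icc a b ×ˢ s) := by
  rintro ⟨t, x⟩ ⟨ht, hx⟩
  rcases ht.2.lt_or_eq with htb | rfl
  · refine (hleft _ ⟨⟨ht.1, htb⟩, hx⟩).mono_of_mem_nhdsWithin ?_
    filter_upwards [self_mem_nhdsWithin,
      mem_nhdsWithin_of_mem_nhds (continuous_fst.continuousAt (Iio_mem_nhds htb))] with q hq hqb
    exact ⟨⟨hq.1.1, hqb⟩, hq.2⟩
  · refine (hright _ ⟨⟨hab, le_rfl⟩, hx⟩).mono_of_mem_nhdsWithin ?_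
    filter_upwards [self_mem_nhdsWithin,
      mem_nhdsWithin_of_mem_nhds (continuous_fst.continuousAt (Ioi_mem_nhds hab))] with q hq hqa
    exact ⟨⟨hqa, hq.1.2⟩, hq.2⟩

theorem ExtinctAt.isFDESolOnIcc {T : ℝ} {Ω : Set (ℰ d)} {u₀ : ℰ d → ℝ} (hext : ExtinctAt T Ω u)
    (hinit : TakesInit T Ω u u₀) (hΩ : IsOpen Ω) (hT : 0 < T) (hu : IsFDESol m (Ioo 0 T ×ˢ Ω) u) :
    IsFDESolOnIcc m 0 T Ω u :=
  ⟨hΩ, hu, continuousOn_Icc_prod_of_Ico_of_Ioc hT hinit.1 hext.1⟩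

theorem one_le_and_critical_exponent_lt {p : ℝ} (hd : d ≠ 0)
    (hp₁ : (d - 2 : ℝ) / d < m → p = 1) (hp₂ : m ≤ (d - 2 : ℝ) / d → d * (1 - m) / 2 < p) :
    1 ≤ p ∧ d * (1 - m) / 2 < p := by
  have hd0 : (0 : ℝ) < d := by positivity
  rcases lt_or_ge ((d - 2 : ℝ) / d) m with h | h
  · obtain rfl := hp₁ h
    rw [div_lt_iff₀ hd0] at h
    exact ⟨le_rfl, by linarith⟩
  · have hp := hp₂ h
    rw [le_div_iff₀ hd0] at h
    exact ⟨by linarith, hp⟩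

theorem alternative_harnack_general (hd : d ≠ 0) (hm0 : 0 < m) (hm1 : m < 1) {p : ℝ} (hp : 1 ≤ p)
    (hpc : d * (1 - m) / 2 < p) :
    ∃ C h : ℝ, 0 < C ∧ 0 < h ∧
      ∀ {Ω : Set (ℰ d)} {u : ℝ → ℰ d → ℝ} {t₀ T R : ℝ} {x₀ : ℰ d},
        IsFDESolOnIcc m t₀ T Ω u → t₀ < T → (∀ x ∈ Ω, u T x = 0) → 0 < R →
        closedBall x₀ (2 * R) ⊆ Ω → 0 < ∫ x in ball x₀ R, u t₀ x →
      ∀ t : ℝ, t₀ < t →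
        t < t₀ + h * R ^ (2 - d * (1 - m)) * (∫ x in ball x₀ R, u t₀ x) ^ (1 - m) →
        t < T ∧ ∀ x ∈ ball x₀ R,
          u t x ≤ C * (t - t₀) ^ (-(d * (1 / (2 * p - d * (1 - m))))) *
            ((∫ y in ball x₀ (2 * R), u t₀ y ^ p) ^ (1 / p)) ^
              (2 * p / (2 * p - d * (1 - m))) := by
  obtain ⟨K, hK, hextinct⟩ := IsFDESolOnIcc.exists_rpow_mul_rpow_setIntegral_le d hm0 hm1
  obtain ⟨h, A, hh, hA, hsmooth⟩ :=
    IsFDESolOnIcc.exists_le_rpow_mul_rpow hd hm0 hm1 hp (by linarith)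
  set W := volume.real (ball (0 : ℰ d) 1) ^ ((1 - p⁻¹) * (1 - m))
  have hW : 0 < W := rpow_pos_of_pos (volume_real_ball_one_pos d) _
  refine ⟨A, min (h / W) K⁻¹, hA, by positivity, ?_⟩
  intro Ω u t₀ T R x₀ hu hT hzero hR hball hpos t ht htime
  have ht₀ : t₀ ∈ Icc t₀ T := left_mem_Icc.2 hT.le
  have hcont := (hu.continuousOn_slice ht₀).mono hball
  have hnonneg : ∀ x ∈ closedBall x₀ (2 * R), 0 ≤ u t₀ x :=
    fun x hx => hu.nonneg hT ht₀ (hball hx)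
  have hmass : 0 < ∫ x in ball x₀ (2 * R), u t₀ x := hpos.trans_le
    (setIntegral_le_setIntegral_ball hcont hnonneg (ball_subset_ball (by linarith)))
  have hJ := setIntegral_ball_rpow_pos hp hcont hnonneg hmass
  set X := R ^ (2 - d * (1 - m)) * (∫ x in ball x₀ R, u t₀ x) ^ (1 - m) with hX_eq
  have hX : 0 < X := by positivity
  rw [← sub_lt_iff_lt_add', mul_assoc, ← hX_eq] at htime
  have htT : t < T := by
    have hlt := htime.trans_le (mul_le_mul_of_nonneg_right (min_le_right _ _) hX.le)
    rw [lt_inv_mul_iff₀ hK] at hlt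
    linarith [lt_of_mul_lt_mul_left (hlt.trans_le (hextinct hu hT hzero hR hball)) hK.le]
  have htime' : t - t₀ ≤ h * (R ^ (2 - d * ((1 - m) / p)) *
      (∫ y in ball x₀ (2 * R), u t₀ y ^ p) ^ ((1 - m) / p)) :=
    calc t - t₀ ≤ h / W * X :=
          htime.le.trans (mul_le_mul_of_nonneg_right (min_le_left _ _) hX.le)
      _ ≤ h / W * (W * _) := mul_le_mul_of_nonneg_left
          (rpow_mul_rpow_setIntegral_ball_le_two_mul hm1.le hp hR hcont hnonneg) (by positivity)
      _ = _ := by rw [← mul_assoc, div_mul_cancel₀ _ hW.ne']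
  refine ⟨htT, fun x hx => ?_⟩
  have hexp : 1 / p * (2 * p / (2 * p - d * (1 - m))) = 2 / (2 * p - d * (1 - m)) := by
    field_simp
  rw [← rpow_mul hJ.le, hexp, mul_one_div]
  exact hsmooth hu ⟨ht, htT⟩ hR hball hJ htime' hx

end Harnack

end

/-- **Theorem 5.3: alternative form of the Harnack inequality.** Here `m_c = (d-2)/d`,
`p_c = d(1-m)/2`, `ϑ_p = 1/(2p - d(1-m))`, and
`t_*(t₀) = h₂ R^{2-d(1-m)} ‖u(t₀,·)‖_{L¹(B_R)}^{1-m}`. The supremum over the ball is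
expressed pointwise and the infimum as `sInf` of the image of the ball. -/
theorem alternative_harnack
    (d : ℕ) (hd : 3 ≤ d) (m : ℝ) (hm0 : 0 < m) (hm1 : m < 1) (p : ℝ)
    (hp₁ : (d - 2 : ℝ) / d < m → p = 1)
    (hp₂ : m ≤ (d - 2 : ℝ) / d → d * (1 - m) / 2 < p) :
    ∃ C₁ C₂ h₂ : ℝ, 0 < C₁ ∧ 0 < C₂ ∧ 0 < h₂ ∧
      ∀ (Ω : Set (EuclideanSpace ℝ (Fin d))), IsOpen Ω →
      ∀ (u : ℝ → EuclideanSpace ℝ (Fin d) → ℝ) (u₀ : EuclideanSpace ℝ (Fin d) → ℝ) (T : ℝ),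
        0 < T →
        IsFDESol m (Ioo 0 T ×ˢ Ω) u →
        (∀ x ∈ Ω, 0 ≤ u₀ x) →
        LocallyIntegrableOn (fun x => u₀ x ^ p) Ω →
        TakesInit T Ω u u₀ →
        ExtinctAt T Ω u →
      ∀ (x₀ : EuclideanSpace ℝ (Fin d)) (R : ℝ), 0 < R →
        closedBall x₀ (6 * R) ⊆ Ω →
      ∀ t₀ : ℝ, 0 ≤ t₀ → t₀ < T →
        0 < ∫ x in ball x₀ R, u t₀ x →
      ∀ t ϑ : ℝ, 0 ≤ ϑ → t₀ < t - ϑ →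
        t + ϑ < t₀ + h₂ * R ^ (2 - d * (1 - m)) * (∫ x in ball x₀ R, u t₀ x) ^ (1 - m) →
      ∀ x ∈ ball x₀ R,
        u t x ≤
          C₁ * (t - t₀) ^ (-(d * (1 / (2 * p - d * (1 - m))))) *
            ((∫ y in ball x₀ (2 * R), u t₀ y ^ p) ^ (1 / p)) ^
              (2 * p / (2 * p - d * (1 - m))) +
          C₂ * ((∫ y in ball x₀ R, u t₀ y ^ p) ^ (1 / p) * R ^ (d : ℝ) /
              ((∫ y in ball x₀ R, u t₀ y) * R ^ ((d : ℝ) / p))) ^ (1 / m) *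
            sInf (u (t + ϑ) '' ball x₀ R) ∧
        u t x ≤
          C₁ * (t - t₀) ^ (-(d * (1 / (2 * p - d * (1 - m))))) *
            ((∫ y in ball x₀ (2 * R), u t₀ y ^ p) ^ (1 / p)) ^
              (2 * p / (2 * p - d * (1 - m))) +
          C₂ * ((∫ y in ball x₀ R, u t₀ y ^ p) ^ (1 / p) * R ^ (d : ℝ) /
              ((∫ y in ball x₀ R, u t₀ y) * R ^ ((d : ℝ) / p))) ^ (1 / m) *
            sInf (u (t - ϑ) '' ball x₀ R) := by
  obtain ⟨hp, hpc⟩ := one_le_and_critical_exponent_lt (by lia) hp₁ hp₂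
  obtain ⟨C, h, hC, hh, hbound⟩ := alternative_harnack_general (d := d) (by lia) hm0 hm1 hp hpc
  refine ⟨C, 1, h, hC, one_pos, hh, ?_⟩
  intro Ω hΩ u u₀ T hT hu _ _ hinit hext x₀ R hR hball t₀ ht₀ ht₀T hmass t ϑ hϑ hlow hup x hx
  have hsol := (hext.isFDESolOnIcc hinit hΩ hT hu).mono ht₀ le_rfl
  have hsmooth := hbound hsol ht₀T hext.2.1 hR
    ((closedBall_subset_closedBall (by linarith)).trans hball) hmass
  have hnonneg : ∀ s ∈ Icc t₀ T, ∀ y ∈ ball x₀ R, 0 ≤ u s y := fun s hs y hy =>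
    hsol.nonneg ht₀T hs
      (hball (closedBall_subset_closedBall (by linarith) (ball_subset_closedBall hy)))
  have hinf : ∀ s ∈ Icc t₀ T, 0 ≤ sInf (u s '' ball x₀ R) :=
    fun s hs => Real.sInf_nonneg (forall_mem_image.2 (hnonneg s hs))
  have hJ : 0 ≤ ∫ y in ball x₀ R, u t₀ y ^ p := setIntegral_nonneg measurableSet_ball
    fun y hy => rpow_nonneg (hnonneg t₀ (left_mem_Icc.2 ht₀T.le) y hy) p
  have hle := (hsmooth t (by linarith) (by linarith)).2 x hx
  have hfuture : t + ϑ < T := (hsmooth (t + ϑ) (by linarith) hup).1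
  exact ⟨le_add_of_le_of_nonneg hle (mul_nonneg (by positivity)
      (hinf _ ⟨by linarith, hfuture.le⟩)),
    le_add_of_le_of_nonneg hle (mul_nonneg (by positivity) (hinf _ ⟨hlow.le, by linarith⟩))⟩
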